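/- arXiv:1511.08348 — 6 statements merged into one kernel-verified Lean document; each statement's English description precedes it below -/
import Mathlib

section
/- Let k be a field and let Q be a finite connected quiver without sources or sinks which is not isomorphic to the c-crown for any c ≥ 1. Then for every m ≥ 1 the kernel of the linear map D_{m,m} : k(Q_m//Q_m) → k(Q_{m+1}//Q_{m+1}) is a one-dimensional k-vector space, spanned by the element Σ_{γ ∈ Q_m} (γ, γ). -/
/-!
The sign in `D_{m,m}` is `(-1)^(2m+1) = -1`, so `D_{m,m} = L - R`, where `L` appends and `R`
prepends one and the same arrow to both members of a parallel pair. Both operations are injective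
and `L`, `R` send the diagonal element to the diagonal element, which is therefore in the kernel.

Conversely let `L f = R f` and append an arrow `a` to `(γ, β)`. If the first arrows of `aγ` and
`aβ` differ, then `f (γ, β) = 0`; otherwise `f (γ, β)` is the coefficient at the pair obtained by
deleting this common first arrow. Iterating along a path `y` of length `m` slides the window over
the whole of `γ` and `β`: if no step makes the coefficient vanish, then `γ` and `β` both equal the
deleted prefix, so `γ = β`, and `f (γ, γ) = f (y, y)`. Hence `f` is supported on the diagonal, and
all paths of length `m` starting or ending at a vertex have the same diagonal coefficient. A single
slide along an arrow `v ⟶ w` shows that the values at `v` and `w` agree, and connectedness finishes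
the proof.
-/

open Quiver

/-- Pairs of parallel paths: a path `γ` of length `m` and a path `β` of length `p`
with the same source and the same target.  This is the set `Q_m // Q_p`. -/
structure ParPair (V : Type) [Quiver V] (m p : ℕ) where
  src : V
  tgt : V
  γ : Quiver.Path src tgt
  β : Quiver.Path src tgt
  hγ : γ.length = m
  hβ : β.length = p

instance pathFinite (V : Type) [Quiver V] [Fintype V] [∀ a b : V, Fintype (a ⟶ b)]
    (n : ℕ) (a b : V) : Finite {p : Quiver.Path a b // p.length = n} := by
  induction n generalizing b with
  | zero =>
      have : Subsingleton {p : Quiver.Path a b // p.length = 0} := by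
        constructor
        rintro ⟨p, hp⟩ ⟨q, hq⟩
        cases p with
        | nil =>
            cases q with
            | nil => rfl
            | cons q e => simp at hq
        | cons p e => simp at hp
      infer_instance
  | succ n ih =>
      haveI : ∀ c : V, Finite {p : Quiver.Path a c // p.length = n} := ih
      exact Finite.of_surjective
        (fun x : Σ c : V, {p : Quiver.Path a c // p.length = n} × (c ⟶ b) =>
          (⟨x.2.1.1.cons x.2.2, by simp [x.2.1.2]⟩ :
            {p : Quiver.Path a b // p.length = n + 1}))
        (by
          rintro ⟨p, hp⟩
          cases p with
          | nil => simp at hp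
          | cons q e => exact ⟨⟨_, ⟨q, by simpa using hp⟩, e⟩, rfl⟩)

noncomputable instance pathFintype (V : Type) [Quiver V] [Fintype V]
    [∀ a b : V, Fintype (a ⟶ b)] (n : ℕ) (a b : V) :
    Fintype {p : Quiver.Path a b // p.length = n} := Fintype.ofFinite _

/-- The linear map `D_{m,p} : k(Q_m//Q_p) → k(Q_{m+1}//Q_{p+1})` given on basis elements
by `D_{m,p}(γ, β) = Σ_{a} (aγ, aβ) + (−1)^{p+m+1} Σ_{a} (γa, βa)`. -/
noncomputable def Dmap (k : Type) [Field k] (V : Type) [Quiver V] [Fintype V]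
    [∀ a b : V, Fintype (a ⟶ b)] (m p : ℕ) :
    (ParPair V m p →₀ k) →ₗ[k] (ParPair V (m + 1) (p + 1) →₀ k) :=
  Finsupp.lift _ k _ fun x =>
    (∑ c : V, ∑ e : x.tgt ⟶ c,
      Finsupp.single ⟨x.src, c, x.γ.cons e, x.β.cons e, by simp [x.hγ], by simp [x.hβ]⟩ (1 : k))
    + ((-1 : k) ^ (p + m + 1)) •
      (∑ c : V, ∑ e : c ⟶ x.src,
        Finsupp.single ⟨c, x.tgt, (e.toPath).comp x.γ, (e.toPath).comp x.β,
          by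
            have h := x.hγ
            simp only [Quiver.Path.length_comp, Quiver.Hom.toPath,
              Quiver.Path.length_cons, Quiver.Path.length_nil]
            omega,
          by
            have h := x.hβ
            simp only [Quiver.Path.length_comp, Quiver.Hom.toPath,
              Quiver.Path.length_cons, Quiver.Path.length_nil]
            omega⟩ (1 : k))

/-- The diagonal element `Σ_{γ ∈ Q_m} (γ, γ)` of `k(Q_m//Q_m)`. -/
noncomputable def diagElem (k : Type) [Field k] (V : Type) [Quiver V] [Fintype V]
    [∀ a b : V, Fintype (a ⟶ b)] (m : ℕ) : ParPair V m m →₀ k :=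
  ∑ a : V, ∑ b : V, ∑ γ : {q : Quiver.Path a b // q.length = m},
    Finsupp.single ⟨a, b, γ.1, γ.1, γ.2, γ.2⟩ (1 : k)

/-- The `c`-crown quiver structure on `ZMod c`: exactly one arrow `i ⟶ i + 1`. -/
instance crownQuiver (c : ℕ) : Quiver (ZMod c) := ⟨fun i j => PLift (i + 1 = j)⟩

/-- `Q` is isomorphic to the `c`-crown for some `c ≥ 1`: there are bijections between the
vertices (resp. the arrows) commuting with the source and target maps. -/
def IsCrown (V : Type) [Quiver V] : Prop :=
  ∃ c : ℕ, 1 ≤ c ∧ ∃ σ : V ≃ ZMod c, ∀ a b : V, Nonempty ((a ⟶ b) ≃ (σ a ⟶ σ b))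

/-- `Q` is connected: it is nonempty and the underlying undirected graph is connected. -/
def QuiverConnected (V : Type) [Quiver V] : Prop :=
  Nonempty V ∧ Subsingleton (Quiver.WeaklyConnectedComponent V)

/-- `Q` has no sources and no sinks: every vertex has an incoming and an outgoing arrow. -/
def NoSourcesOrSinks (V : Type) [Quiver V] : Prop :=
  ∀ v : V, (∃ u : V, Nonempty (u ⟶ v)) ∧ (∃ w : V, Nonempty (v ⟶ w))

/-- The linear extension of the multivalued map sending `a` to all the `ι a b` with `b : B a`.
Both halves of `D_{m,p}` are of this form. -/
noncomputable def linearSum (k : Type*) [Semiring k] {A C : Type*} {B : A → Type*}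
    [∀ a, Fintype (B a)] (ι : ∀ a, B a → C) : (A →₀ k) →ₗ[k] (C →₀ k) :=
  Finsupp.linearCombination k fun a => ∑ b, Finsupp.single (ι a b) 1

section LinearSum

variable {k A C : Type*} [Semiring k] {B : A → Type*} [∀ a, Fintype (B a)] {ι : ∀ a, B a → C}

theorem linearSum_apply (hι : Function.Injective fun z : Σ a, B a => ι z.1 z.2) (f : A →₀ k)
    (a : A) (b : B a) : linearSum k ι f (ι a b) = f a := by
  classical
  have hι_iff (a' : A) (b' : B a') : ι a' b' = ι a b ↔ (⟨a', b'⟩ : Σ a, B a) = ⟨a, b⟩ :=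
    hι.eq_iff (a := ⟨a', b'⟩) (b := ⟨a, b⟩)
  induction f using Finsupp.induction_linear with
  | zero => simp
  | add f g hf hg => simp [hf, hg]
  | single a' t =>
    obtain rfl | ha := eq_or_ne a' a
    · simp [linearSum, Finsupp.single_apply, hι_iff]
    · simp [linearSum, hι_iff, ha]

theorem linearSum_apply_of_forall_ne {c : C} (hc : ∀ a b, ι a b ≠ c) (f : A →₀ k) :
    linearSum k ι f c = 0 := by
  induction f using Finsupp.induction_linear with
  | zero => simp
  | add f g hf hg => simp [hf, hg]
  | single a t => simp [linearSum, hc]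

theorem linearSum_eq (hι : Function.Injective fun z : Σ a, B a => ι z.1 z.2) {f : A →₀ k}
    {g : C →₀ k} (hfg : ∀ a b, g (ι a b) = f a) (hg : ∀ c, g c ≠ 0 → ∃ a b, ι a b = c) :
    linearSum k ι f = g := by
  ext c
  by_cases hc : ∃ a b, ι a b = c
  · obtain ⟨a, b, rfl⟩ := hc
    rw [linearSum_apply hι, hfg]
  · rw [linearSum_apply_of_forall_ne (by simpa using hc), not_imp_comm.1 (hg c) hc]

end LinearSum

section Paths

variable {V : Type*} [Quiver V]

theorem sigma_mk_eq_of_path_comp_eq {a b c d : V} {p : Path a b} {q : Path b c} {p' : Path a d}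
    {q' : Path d c} (hlength : q.length = q'.length) (h : p.comp q = p'.comp q') :
    (⟨b, p, q⟩ : Σ v, Path a v × Path v c) = ⟨d, p', q'⟩ := by
  induction q with
  | nil =>
    cases q' with
    | nil => cases h; rfl
    | cons q' e' => simp at hlength
  | cons q e ih =>
    cases q' with
    | nil => simp at hlength
    | cons q' e' =>
      simp only [Path.comp_cons, Path.cons.injEq] at h
      obtain ⟨rfl, hpq, he⟩ := h
      cases he
      cases ih (by simpa using hlength) (eq_of_heq hpq)
      rfl

theorem exists_path_from_length_eq (hV : ∀ v : V, ∃ w, Nonempty (v ⟶ w)) (v : V) (n : ℕ) :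
    ∃ (w : V) (p : Path v w), p.length = n := by
  induction n with
  | zero => exact ⟨v, Path.nil, rfl⟩
  | succ n ih =>
    obtain ⟨w, p, hp⟩ := ih
    obtain ⟨u, ⟨e⟩⟩ := hV w
    exact ⟨u, p.cons e, by simp [hp]⟩

theorem exists_path_to_length_eq (hV : ∀ v : V, ∃ u, Nonempty (u ⟶ v)) (v : V) (n : ℕ) :
    ∃ (u : V) (p : Path u v), p.length = n := by
  induction n with
  | zero => exact ⟨v, Path.nil, rfl⟩
  | succ n ih =>
    obtain ⟨w, p, hp⟩ := ih
    obtain ⟨u, ⟨e⟩⟩ := hV w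
    exact ⟨u, e.toPath.comp p, by simp [hp, add_comm]⟩

theorem eq_of_weaklyConnected [Subsingleton (WeaklyConnectedComponent V)] {K : Sort*} {g : V → K}
    (hg : ∀ v w : V, (v ⟶ w) → g v = g w) (v w : V) : g v = g w := by
  have eq_of_zigzag (u : Symmetrify V) : @Path (Symmetrify V) _ v u → g v = g u := by
    intro zigzag
    induction zigzag with
    | nil => rfl
    | cons _ e ih =>
      rcases e with e | e
      · exact ih.trans (hg _ _ e)
      · exact ih.trans (hg _ _ e).symm
  obtain ⟨p⟩ := (WeaklyConnectedComponent.eq v w).1 (Subsingleton.elim _ _)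
  exact eq_of_zigzag w p

end Paths

namespace ParPair

variable {V : Type} [Quiver V] {m p : ℕ}

/-- The parallel pair `(aγ, aβ)` obtained from `(γ, β)` by appending an arrow `a`. -/
def append (x : ParPair V m p) (a : Star x.tgt) : ParPair V (m + 1) (p + 1) :=
  ⟨x.src, a.1, x.γ.cons a.2, x.β.cons a.2, by simp [x.hγ], by simp [x.hβ]⟩

/-- The parallel pair `(γa, βa)` obtained from `(γ, β)` by prepending an arrow `a`. -/
def prepend (x : ParPair V m p) (a : Costar x.src) : ParPair V (m + 1) (p + 1) :=
  ⟨a.1, x.tgt, a.2.toPath.comp x.γ, a.2.toPath.comp x.β,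
    by simp [x.hγ, add_comm], by simp [x.hβ, add_comm]⟩

/-- The diagonal pair `(γ, γ)`. -/
def diag {a b : V} (γ : Path a b) (hγ : γ.length = m) : ParPair V m m := ⟨a, b, γ, γ, hγ, hγ⟩

theorem append_injective :
    Function.Injective fun z : Σ x : ParPair V m p, Star x.tgt => z.1.append z.2 := by
  rintro ⟨⟨s, t, γ, β, _, _⟩, c, e⟩ ⟨⟨s', t', γ', β', _, _⟩, c', e'⟩ h
  simp only [append, mk.injEq] at h
  obtain ⟨rfl, rfl, hγ, hβ⟩ := h
  cases hγ
  cases hβ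
  rfl

theorem prepend_injective :
    Function.Injective fun z : Σ x : ParPair V m p, Costar x.src => z.1.prepend z.2 := by
  rintro ⟨⟨s, t, γ, β, hγ, _⟩, c, e⟩ ⟨⟨s', t', γ', β', hγ', _⟩, c', e'⟩ h
  simp only [prepend, mk.injEq] at h
  obtain ⟨rfl, rfl, hγγ', hββ'⟩ := h
  have hsplit := sigma_mk_eq_of_path_comp_eq (hγ.trans hγ'.symm) (eq_of_heq hγγ')
  simp only [Sigma.mk.injEq] at hsplit
  obtain ⟨rfl, hsplit⟩ := hsplit
  obtain ⟨he, rfl⟩ := Prod.mk.inj (eq_of_heq hsplit)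
  cases he
  obtain rfl := Path.comp_injective_right _ (eq_of_heq hββ')
  rfl

theorem exists_append_eq_of_diag {x : ParPair V (m + 1) (m + 1)} (hx : x.γ = x.β) :
    ∃ (y : ParPair V m m) (a : Star y.tgt), y.append a = x := by
  obtain ⟨s, t, γ, β, hγ, hβ⟩ := x
  obtain rfl : γ = β := hx
  cases γ with
  | nil => simp at hγ
  | cons γ e => exact ⟨diag γ (by simpa using hγ), ⟨_, e⟩, rfl⟩

theorem exists_prepend_eq_of_diag {x : ParPair V (m + 1) (m + 1)} (hx : x.γ = x.β) :
    ∃ (y : ParPair V m m) (a : Costar y.src), y.prepend a = x := by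
  obtain ⟨s, t, γ, β, hγ, hβ⟩ := x
  obtain rfl : γ = β := hx
  obtain ⟨c, e, γ', hγ', rfl⟩ := Path.eq_toPath_comp_of_length_eq_succ γ hγ
  exact ⟨diag γ' hγ', ⟨s, e⟩, rfl⟩

end ParPair

section Kernel

variable {k : Type} [Field k] {V : Type} [Quiver V] [Fintype V] [∀ a b : V, Fintype (a ⟶ b)]
  {m : ℕ}

theorem Dmap_eq_linearSum_append_add (p : ℕ) :
    Dmap k V m p = linearSum k ParPair.append
      + (-1 : k) ^ (p + m + 1) • linearSum k ParPair.prepend := by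
  ext1 x
  ext1
  simp [Dmap, linearSum, Fintype.sum_sigma, ParPair.append, ParPair.prepend]

theorem mem_ker_Dmap_iff {f : ParPair V m m →₀ k} :
    f ∈ LinearMap.ker (Dmap k V m m) ↔
      linearSum k ParPair.append f = linearSum k ParPair.prepend f := by
  have hsign : (-1 : k) ^ (m + m + 1) = -1 := Odd.neg_one_pow ⟨m, by ring⟩
  simp [Dmap_eq_linearSum_append_add, hsign, ← sub_eq_add_neg, sub_eq_zero]

open Classical in
theorem diagElem_apply (x : ParPair V m m) : diagElem k V m x = if x.γ = x.β then 1 else 0 := by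
  obtain ⟨s, t, γ, β, hγ, hβ⟩ := x
  simp only [diagElem, Finsupp.finsetSum_apply, Finsupp.single_apply, ParPair.mk.injEq]
  rw [Fintype.sum_eq_single s (by simp +contextual), Fintype.sum_eq_single t (by simp +contextual),
    Fintype.sum_eq_single ⟨γ, hγ⟩]
  · simp
  · rintro ⟨γ', hγ'⟩ hne
    simp_all

theorem linearSum_append_diagElem :
    linearSum k ParPair.append (diagElem k V m) = diagElem k V (m + 1) := by
  classical
  refine linearSum_eq ParPair.append_injective (fun x a => ?_) fun x hx => ?_
  · simp [diagElem_apply, ParPair.append]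
  · exact ParPair.exists_append_eq_of_diag (by simpa [diagElem_apply] using hx)

theorem linearSum_prepend_diagElem :
    linearSum k ParPair.prepend (diagElem k V m) = diagElem k V (m + 1) := by
  classical
  refine linearSum_eq ParPair.prepend_injective (fun x a => ?_) fun x hx => ?_
  · simp [diagElem_apply, ParPair.prepend]
  · exact ParPair.exists_prepend_eq_of_diag (by simpa [diagElem_apply] using hx)

theorem diagElem_mem_ker_Dmap : diagElem k V m ∈ LinearMap.ker (Dmap k V m m) :=
  mem_ker_Dmap_iff.2 (linearSum_append_diagElem.trans linearSum_prepend_diagElem.symm)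

theorem diagElem_ne_zero [Nonempty V] (hV : ∀ v : V, ∃ w, Nonempty (v ⟶ w)) :
    diagElem k V m ≠ 0 := by
  classical
  obtain ⟨w, γ, hγ⟩ := exists_path_from_length_eq hV (Classical.arbitrary V) m
  refine fun h => one_ne_zero (α := k) ?_
  simpa [diagElem_apply, ParPair.diag] using DFunLike.congr_fun h (ParPair.diag γ hγ)

variable {f : ParPair V m m →₀ k}

theorem exists_append_eq_prepend_of_mem_ker (hf : f ∈ LinearMap.ker (Dmap k V m m))
    {x : ParPair V m m} (hx : x.γ = x.β ∨ f x ≠ 0) (a : Star x.tgt) :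
    ∃ (y : ParPair V m m) (b : Costar y.src), x.append a = y.prepend b ∧ f x = f y := by
  have hfx : linearSum k ParPair.prepend f (x.append a) = f x := by
    rw [← mem_ker_Dmap_iff.1 hf, linearSum_apply ParPair.append_injective]
  have hprepend : ∃ (y : ParPair V m m) (b : Costar y.src), y.prepend b = x.append a := by
    rcases hx with hdiag | hne
    · exact ParPair.exists_prepend_eq_of_diag (congrArg (Path.cons · a.2) hdiag)
    · contrapose! hne
      rw [← hfx, linearSum_apply_of_forall_ne hne]
  obtain ⟨y, b, hy⟩ := hprepend
  rw [← hy, linearSum_apply ParPair.prepend_injective] at hfx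
  exact ⟨y, b, hy.symm, hfx.symm⟩

theorem exists_cons_eq_toPath_comp_of_mem_ker (hf : f ∈ LinearMap.ker (Dmap k V m m))
    {a b c : V} {γ β : Path a b} {hγ : γ.length = m} {hβ : β.length = m}
    (hx : γ = β ∨ f ⟨a, b, γ, β, hγ, hβ⟩ ≠ 0) (e : b ⟶ c) :
    ∃ (d : V) (g : a ⟶ d) (γ' β' : Path d c) (hγ' : γ'.length = m) (hβ' : β'.length = m),
      γ.cons e = g.toPath.comp γ' ∧ β.cons e = g.toPath.comp β' ∧
      f ⟨a, b, γ, β, hγ, hβ⟩ = f ⟨d, c, γ', β', hγ', hβ'⟩ := by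
  obtain ⟨⟨d, c', γ', β', hγ', hβ'⟩, ⟨a', g⟩, h, hfxy⟩ :=
    exists_append_eq_prepend_of_mem_ker hf (x := ⟨a, b, γ, β, hγ, hβ⟩) hx ⟨c, e⟩
  simp only [ParPair.append, ParPair.prepend, ParPair.mk.injEq] at h
  obtain ⟨rfl, rfl, hγγ', hββ'⟩ := h
  exact ⟨d, g, γ', β', hγ', hβ', eq_of_heq hγγ', eq_of_heq hββ', hfxy⟩

theorem exists_comp_eq_comp_of_mem_ker (hf : f ∈ LinearMap.ker (Dmap k V m m))
    {a b c : V} {γ β : Path a b} {hγ : γ.length = m} {hβ : β.length = m}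
    (hx : γ = β ∨ f ⟨a, b, γ, β, hγ, hβ⟩ ≠ 0) (y : Path b c) :
    ∃ (d : V) (w : Path a d) (γ' β' : Path d c) (hγ' : γ'.length = m) (hβ' : β'.length = m),
      γ.comp y = w.comp γ' ∧ β.comp y = w.comp β' ∧
      f ⟨a, b, γ, β, hγ, hβ⟩ = f ⟨d, c, γ', β', hγ', hβ'⟩ := by
  induction y with
  | nil => exact ⟨a, Path.nil, γ, β, hγ, hβ, by simp, by simp, rfl⟩
  | cons y e ih =>
    obtain ⟨d, w, γ₁, β₁, hγ₁, hβ₁, hγw, hβw, hf₁⟩ := ih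
    have hx₁ : γ₁ = β₁ ∨ f ⟨d, _, γ₁, β₁, hγ₁, hβ₁⟩ ≠ 0 :=
      hx.imp (fun h => Path.comp_injective_right w (by rw [← hγw, ← hβw, h])) (hf₁ ▸ ·)
    obtain ⟨d', g, γ₂, β₂, hγ₂, hβ₂, hγg, hβg, hf₂⟩ :=
      exists_cons_eq_toPath_comp_of_mem_ker hf hx₁ e
    refine ⟨d', w.comp g.toPath, γ₂, β₂, hγ₂, hβ₂, ?_, ?_, hf₁.trans hf₂⟩
    · rw [Path.comp_cons, hγw, ← Path.comp_cons, hγg, Path.comp_assoc]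
    · rw [Path.comp_cons, hβw, ← Path.comp_cons, hβg, Path.comp_assoc]

theorem eq_and_apply_eq_apply_diag_of_mem_ker (hf : f ∈ LinearMap.ker (Dmap k V m m))
    {a b c : V} {γ β : Path a b} {hγ : γ.length = m} {hβ : β.length = m}
    (hx : γ = β ∨ f ⟨a, b, γ, β, hγ, hβ⟩ ≠ 0) {y : Path b c} (hy : y.length = m) :
    γ = β ∧ f ⟨a, b, γ, β, hγ, hβ⟩ = f (ParPair.diag y hy) := by
  obtain ⟨d, w, γ', β', hγ', hβ', hγw, hβw, hfy⟩ := exists_comp_eq_comp_of_mem_ker hf hx y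
  cases sigma_mk_eq_of_path_comp_eq (hy.trans hγ'.symm) hγw
  cases sigma_mk_eq_of_path_comp_eq (hy.trans hβ'.symm) hβw
  exact ⟨rfl, hfy⟩

theorem eq_of_apply_ne_zero_of_mem_ker (hf : f ∈ LinearMap.ker (Dmap k V m m))
    (hV : ∀ v : V, ∃ w, Nonempty (v ⟶ w)) {x : ParPair V m m} (hx : f x ≠ 0) :
    x.γ = x.β := by
  obtain ⟨c, y, hy⟩ := exists_path_from_length_eq hV x.tgt m
  exact (eq_and_apply_eq_apply_diag_of_mem_ker hf (.inr hx) hy).1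

theorem apply_diag_eq_of_tgt_eq_src (hf : f ∈ LinearMap.ker (Dmap k V m m))
    {a b c : V} {γ : Path a b} {y : Path b c} (hγ : γ.length = m) (hy : y.length = m) :
    f (ParPair.diag γ hγ) = f (ParPair.diag y hy) :=
  (eq_and_apply_eq_apply_diag_of_mem_ker hf (.inl rfl) hy).2

theorem apply_diag_eq_of_src_eq (hf : f ∈ LinearMap.ker (Dmap k V m m))
    (hV : ∀ v : V, ∃ u, Nonempty (u ⟶ v)) {a b c : V} {γ : Path a b} {y : Path a c}
    (hγ : γ.length = m) (hy : y.length = m) :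
    f (ParPair.diag γ hγ) = f (ParPair.diag y hy) := by
  obtain ⟨u, q, hq⟩ := exists_path_to_length_eq hV a m
  rw [← apply_diag_eq_of_tgt_eq_src hf hq hγ, apply_diag_eq_of_tgt_eq_src hf hq hy]

theorem apply_diag_eq_of_hom (hf : f ∈ LinearMap.ker (Dmap k V m m))
    (hV : ∀ v : V, ∃ u, Nonempty (u ⟶ v)) {v w b c : V} (e : v ⟶ w)
    {γ : Path v b} {y : Path w c} (hγ : γ.length = m) (hy : y.length = m) :
    f (ParPair.diag γ hγ) = f (ParPair.diag y hy) := by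
  obtain ⟨u, q, hq⟩ := exists_path_to_length_eq hV v m
  obtain ⟨d, g, q', β', hq', hβ', hqg, hβg, hqq'⟩ :=
    exists_cons_eq_toPath_comp_of_mem_ker hf (γ := q) (β := q) (hγ := hq) (hβ := hq) (.inl rfl) e
  obtain rfl := Path.comp_injective_right _ (hqg.symm.trans hβg)
  calc f (ParPair.diag γ hγ) = f (ParPair.diag q hq) := (apply_diag_eq_of_tgt_eq_src hf hq hγ).symm
    _ = f (ParPair.diag q' hq') := hqq'
    _ = f (ParPair.diag y hy) := apply_diag_eq_of_tgt_eq_src hf hq' hy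

theorem exists_forall_apply_diag_eq (hf : f ∈ LinearMap.ker (Dmap k V m m))
    (hconn : QuiverConnected V) (hns : NoSourcesOrSinks V) :
    ∃ t : k, ∀ (a b : V) (γ : Path a b) (hγ : γ.length = m), f (ParPair.diag γ hγ) = t := by
  have := hconn.2
  obtain ⟨v₀⟩ := hconn.1
  choose tgt y hy using fun v => exists_path_from_length_eq (fun v => (hns v).2) v m
  have hconst : ∀ v w, f (ParPair.diag (y v) (hy v)) = f (ParPair.diag (y w) (hy w)) :=
    eq_of_weaklyConnected fun v w e =>
      apply_diag_eq_of_hom hf (fun v => (hns v).1) e (hy v) (hy w)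
  exact ⟨f (ParPair.diag (y v₀) (hy v₀)), fun a b γ hγ =>
    (apply_diag_eq_of_src_eq hf (fun v => (hns v).1) hγ (hy a)).trans (hconst a v₀)⟩

theorem mem_span_diagElem_of_mem_ker (hf : f ∈ LinearMap.ker (Dmap k V m m))
    (hconn : QuiverConnected V) (hns : NoSourcesOrSinks V) :
    f ∈ Submodule.span k {diagElem k V m} := by
  classical
  obtain ⟨t, ht⟩ := exists_forall_apply_diag_eq hf hconn hns
  refine Submodule.mem_span_singleton.2 ⟨t, Finsupp.ext fun x => ?_⟩
  by_cases hx : x.γ = x.β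
  · obtain ⟨a, b, γ, β, hγ, hβ⟩ := x
    obtain rfl : γ = β := hx
    simpa [diagElem_apply, ParPair.diag] using (ht a b γ hγ).symm
  · have hfx : f x = 0 :=
      not_imp_comm.1 (eq_of_apply_ne_zero_of_mem_ker hf fun v => (hns v).2) hx
    simp [diagElem_apply, hx, hfx]

end Kernel

theorem ker_D_diag_general (k : Type) [Field k] (V : Type) [Quiver V] [Fintype V]
    [∀ a b : V, Fintype (a ⟶ b)] (hconn : QuiverConnected V) (hns : NoSourcesOrSinks V) (m : ℕ) :
    LinearMap.ker (Dmap k V m m) = Submodule.span k {diagElem k V m}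
      ∧ diagElem k V m ≠ 0 := by
  have := hconn.1
  refine ⟨le_antisymm (fun f hf => mem_span_diagElem_of_mem_ker hf hconn hns) ?_,
    diagElem_ne_zero fun v => (hns v).2⟩
  exact (Submodule.span_singleton_le_iff_mem _ _).2 diagElem_mem_ker_Dmap

/-- for a field `k` and a finite connected quiver `Q` without sources or sinks
which is not a crown, for every `m ≥ 1` the kernel of `D_{m,m}` is the one-dimensional
subspace spanned by `Σ_{γ ∈ Q_m} (γ, γ)`. -/
theorem ker_D_diag (k : Type) [Field k] (V : Type) [Quiver V] [Fintype V]
    [∀ a b : V, Fintype (a ⟶ b)]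
    (hconn : QuiverConnected V) (hns : NoSourcesOrSinks V) (hcrown : ¬ IsCrown V)
    (m : ℕ) (hm : 1 ≤ m) :
    LinearMap.ker (Dmap k V m m) = Submodule.span k {diagElem k V m}
      ∧ diagElem k V m ≠ 0 := by
  exact ker_D_diag_general k V hconn hns m
end

section
/- Let k be a field and let Q be a finite connected quiver without sources or sinks which is not isomorphic to the c-crown for any c ≥ 1. Then for all m, p ≥ 1 with m ≠ p, the linear map D_{m,p} : k(Q_m//Q_p) → k(Q_{m+1}//Q_{p+1}) is injective. -/
/-!
Each half of `D` sends a pair to the sum of its extensions by a common arrow at one end, and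
such an extension determines the pair it comes from.  If `D x = 0`, the terms `(aγ, aβ)` of the
first half therefore have to cancel against terms of the second: whenever `(γ, β)` is in the
support of `x` and the arrow `a` starts at their target, `(aγ, aβ) = (γ'b, β'b)` for some
`(γ', β')` in the support and some arrow `b`, and the same holds with the two ends exchanged.

Iterating along a path `c` that starts at the target `t` of `(γ, β)` yields
`(cγ, cβ) = (γ'c', β'c')` with `|c'| = |c|`.  If `|c| = |β|`, then `c' = β` and `β' = c`, so that
`cγ = γ'β`.  If moreover `|γ| < |β|`, this says that `β = rγ` for a nonempty cycle `r` at `t`, and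
that `c` starts with `r`.  As `c` is arbitrary, `t` emits exactly one arrow.  The same iteration
shows that the targets and the sources of pairs in the support are the same vertices and form a
set closed under successors and predecessors, hence are all the vertices.  A finite connected
quiver without sources in which every vertex emits exactly one arrow is a crown.

These products are written as in the statement, arrows composing from right to left;
`Quiver.Path.comp` composes from left to right.
-/

open Quiver

/-! ### Paths in a quiver -/

section Paths

variable {V : Type*} [Quiver V]

/- The conclusion is an equality in a sigma type because the intermediate vertices `b` and `b'`
are not known to agree. -/
lemma sigma_mk_eq_of_comp_eq_comp {a b b' d : V} {p : Path a b} {q : Path b d} {p' : Path a b'}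
    {q' : Path b' d} (h : p.comp q = p'.comp q') (hlen : p.length = p'.length) :
    (⟨b, p, q⟩ : Σ v, Path a v × Path v d) = ⟨b', p', q'⟩ := by
  have hlen' := congrArg Path.length h
  simp only [Path.length_comp, hlen, add_right_inj] at hlen'
  induction q with
  | nil =>
    cases q' with
    | nil => rw [Path.comp_nil, Path.comp_nil] at h; rw [h]
    | cons q' e' => simp at hlen'
  | cons q e ih =>
    cases q' with
    | nil => simp at hlen'
    | cons q' e' =>
      rw [Path.comp_cons, Path.comp_cons] at h
      cases Path.obj_eq_of_cons_eq_cons h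
      cases eq_of_heq (Path.hom_heq_of_cons_eq_cons h)
      cases ih (eq_of_heq (Path.heq_of_cons_eq_cons h)) (by simpa using hlen')
      rfl

lemma sigma_mk_eq_of_toPath_comp_eq_toPath_comp {a b b' d : V} {e : a ⟶ b} {q : Path b d}
    {e' : a ⟶ b'} {q' : Path b' d} (h : e.toPath.comp q = e'.toPath.comp q') :
    (⟨b, e, q⟩ : Σ v, (a ⟶ v) × Path v d) = ⟨b', e', q'⟩ := by
  have hsigma := sigma_mk_eq_of_comp_eq_comp h rfl
  unfold Hom.toPath at hsigma
  cases hsigma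
  rfl

lemma exists_eq_comp_of_comp_eq_comp {a b b' d : V} {p : Path a b} {q : Path b d}
    {p' : Path a b'} {q' : Path b' d} (h : p.comp q = p'.comp q') (hle : p.length ≤ p'.length) :
    ∃ r : Path b b', p' = p.comp r ∧ q = r.comp q' := by
  obtain ⟨v, p₁, r, rfl, hp₁⟩ := Path.exists_eq_comp_of_le_length p' hle
  rw [Path.comp_assoc] at h
  cases sigma_mk_eq_of_comp_eq_comp h hp₁.symm
  exact ⟨r, rfl, rfl⟩

lemma exists_path_from_of_length (hout : ∀ v : V, ∃ w, Nonempty (v ⟶ w)) (n : ℕ) (v : V) :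
    ∃ (w : V) (c : Path v w), c.length = n := by
  induction n with
  | zero => exact ⟨v, .nil, rfl⟩
  | succ n ih =>
    obtain ⟨w, c, rfl⟩ := ih
    obtain ⟨w', ⟨e⟩⟩ := hout w
    exact ⟨w', c.cons e, rfl⟩

lemma exists_path_to_of_length (hin : ∀ v : V, ∃ u, Nonempty (u ⟶ v)) (n : ℕ) (v : V) :
    ∃ (u : V) (c : Path u v), c.length = n := by
  induction n with
  | zero => exact ⟨v, .nil, rfl⟩
  | succ n ih =>
    obtain ⟨u, c, rfl⟩ := ih
    obtain ⟨u', ⟨e⟩⟩ := hin u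
    exact ⟨u', e.toPath.comp c, by simp [add_comm]⟩

lemma mem_of_forall_hom_mem_iff [Subsingleton (WeaklyConnectedComponent V)] {S : Set V} {v : V}
    (hv : v ∈ S) (hS : ∀ {a b : V}, (a ⟶ b) → (a ∈ S ↔ b ∈ S)) (w : V) : w ∈ S := by
  obtain ⟨zigzag⟩ := (WeaklyConnectedComponent.eq v w).1 (Subsingleton.elim _ _)
  induction zigzag with
  | nil => exact hv
  | cons _ e ih => exact e.elim (fun e => (hS e).1 ih) (fun e => (hS e).2 ih)

end Paths

/-! ### Recognising crowns -/

lemma exists_perm_of_unique_out {V : Type*} [Quiver V] [Finite V]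
    (hin : ∀ v : V, ∃ u, Nonempty (u ⟶ v)) (hout : ∀ v : V, ∃ w, Nonempty (v ⟶ w))
    (huniq : ∀ v : V, Subsingleton (Σ w, v ⟶ w)) :
    ∃ g : Equiv.Perm V, ∀ a b : V, Nonempty ((a ⟶ b) ≃ PLift (g a = b)) := by
  choose f hf using hout
  have succ_eq {a b : V} (e : a ⟶ b) : f a = b :=
    congrArg Sigma.fst (Subsingleton.elim (⟨f a, (hf a).some⟩ : Σ w, a ⟶ w) ⟨b, e⟩)
  have hsurj : Function.Surjective f := fun v =>
    let ⟨u, ⟨e⟩⟩ := hin v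
    ⟨u, succ_eq e⟩
  have hsub (a b : V) : Subsingleton (a ⟶ b) :=
    ⟨fun e e' => sigma_mk_injective (Subsingleton.elim (⟨b, e⟩ : Σ w, a ⟶ w) ⟨b, e'⟩)⟩
  refine ⟨.ofBijective f (Finite.surjective_iff_bijective.1 hsurj), fun a b => ⟨?_⟩⟩
  exact ⟨fun e => ⟨succ_eq e⟩, fun h => h.down ▸ (hf a).some, fun _ => Subsingleton.elim _ _,
    fun _ => rfl⟩

lemma exists_equiv_zmod_of_sameCycle {α : Type*} [Finite α] {g : Equiv.Perm α} {v : α}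
    (hg : ∀ w, g.SameCycle v w) :
    ∃ c : ℕ, 1 ≤ c ∧ ∃ σ : α ≃ ZMod c, ∀ w, σ (g w) = σ w + 1 := by
  have horb (w : α) : w ∈ MulAction.orbit (Subgroup.zpowers g) v :=
    let ⟨n, hn⟩ := hg w
    ⟨⟨g ^ n, n, rfl⟩, hn⟩
  let σ : α ≃ ZMod (Function.minimalPeriod (g • ·) v) :=
    (Equiv.subtypeUnivEquiv horb).symm.trans (MulAction.orbitZPowersEquiv g v)
  have hσ (n : ℤ) : σ.symm n = (g ^ n) v :=
    congrArg Subtype.val (MulAction.orbitZPowersEquiv_symm_apply' g v n)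
  refine ⟨_, Nat.pos_of_ne_zero (MulAction.minimalPeriod_pos g v).out, σ, fun w => ?_⟩
  obtain ⟨n, rfl⟩ := hg w
  have hstep : g ((g ^ n) v) = (g ^ (n + 1)) v := by
    rw [add_comm, zpow_one_add, Equiv.Perm.mul_apply]
  rw [hstep, ← hσ, ← hσ, Equiv.apply_symm_apply, Equiv.apply_symm_apply, Int.cast_add, Int.cast_one]

lemma isCrown_of_unique_out {V : Type} [Quiver V] [Finite V] (hconn : QuiverConnected V)
    (hns : NoSourcesOrSinks V) (huniq : ∀ v : V, Subsingleton (Σ w, v ⟶ w)) : IsCrown V := by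
  obtain ⟨⟨v⟩, _⟩ := hconn
  obtain ⟨g, hg⟩ := exists_perm_of_unique_out (fun v => (hns v).1) (fun v => (hns v).2) huniq
  have hcycle : ∀ w, g.SameCycle v w := by
    refine mem_of_forall_hom_mem_iff (S := {w | g.SameCycle v w}) (.refl g v) fun {a b} e => ?_
    obtain rfl : g a = b := ((hg a b).some e).down
    exact Equiv.Perm.sameCycle_apply_right.symm
  obtain ⟨c, hc, σ, hσ⟩ := exists_equiv_zmod_of_sameCycle hcycle
  refine ⟨c, hc, σ, fun a b => ⟨(hg a b).some.trans (Equiv.plift.trans ?_)⟩⟩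
  exact (Equiv.ofIff (by rw [← hσ, σ.apply_eq_iff_eq])).trans Equiv.plift.symm

/-! ### Families of parallel pairs closed under rotation -/

/-- A family `N` of pairs of parallel paths is *rotation closed* if extending a member by any
common arrow at one end always gives an extension of a member by a common arrow at the other end.
Supports of elements of the kernel of `D` have this property. -/
structure IsRotationClosed {V : Type*} [Quiver V]
    (N : ∀ ⦃s t : V⦄, Path s t → Path s t → Prop) : Prop where
  exists_cons_eq {s t u : V} {γ β : Path s t} (hN : N γ β) (a : t ⟶ u) :
    ∃ (s' : V) (b : s ⟶ s') (γ' β' : Path s' u),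
      N γ' β' ∧ γ.cons a = b.toPath.comp γ' ∧ β.cons a = b.toPath.comp β'
  exists_toPath_comp_eq {s t u : V} {γ β : Path s t} (hN : N γ β) (b : u ⟶ s) :
    ∃ (t' : V) (a : t' ⟶ t) (γ' β' : Path u t'),
      N γ' β' ∧ b.toPath.comp γ = γ'.cons a ∧ b.toPath.comp β = β'.cons a

namespace IsRotationClosed

variable {V : Type*} [Quiver V] {N : ∀ ⦃s t : V⦄, Path s t → Path s t → Prop} {s t u : V}
  {γ β : Path s t}

lemma swap (h : IsRotationClosed N) : IsRotationClosed fun _ _ γ β => N β γ where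
  exists_cons_eq hN a :=
    let ⟨s', b, γ', β', hN', hγ, hβ⟩ := h.exists_cons_eq hN a
    ⟨s', b, β', γ', hN', hβ, hγ⟩
  exists_toPath_comp_eq hN b :=
    let ⟨t', a, γ', β', hN', hγ, hβ⟩ := h.exists_toPath_comp_eq hN b
    ⟨t', a, β', γ', hN', hβ, hγ⟩

lemma exists_comp_right_eq (h : IsRotationClosed N) (hN : N γ β) (c : Path t u) :
    ∃ (s' : V) (c' : Path s s') (γ' β' : Path s' u), N γ' β' ∧ c'.length = c.length ∧
      γ.comp c = c'.comp γ' ∧ β.comp c = c'.comp β' := by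
  induction c with
  | nil => exact ⟨s, .nil, γ, β, hN, rfl, by simp, by simp⟩
  | cons c a ih =>
    obtain ⟨s', c', γ', β', hN', hlen, hγ, hβ⟩ := ih
    obtain ⟨s'', b, γ'', β'', hN'', hγ', hβ'⟩ := h.exists_cons_eq hN' a
    refine ⟨s'', c'.cons b, γ'', β'', hN'', by simp [hlen], ?_, ?_⟩
    · rw [Path.comp_cons, hγ, ← Path.comp_cons, hγ', ← Path.comp_assoc, Path.comp_toPath_eq_cons]
    · rw [Path.comp_cons, hβ, ← Path.comp_cons, hβ', ← Path.comp_assoc, Path.comp_toPath_eq_cons]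

lemma exists_comp_left_eq (h : IsRotationClosed N) (hN : N γ β) (c : Path u s) :
    ∃ (t' : V) (c' : Path t' t) (γ' β' : Path u t'), N γ' β' ∧ c'.length = c.length ∧
      c.comp γ = γ'.comp c' ∧ c.comp β = β'.comp c' := by
  induction c generalizing t with
  | nil => exact ⟨t, .nil, γ, β, hN, rfl, by simp, by simp⟩
  | cons c b ih =>
    obtain ⟨t', a, γ', β', hN', hγ, hβ⟩ := h.exists_toPath_comp_eq hN b
    obtain ⟨t'', c', γ'', β'', hN'', hlen, hγ', hβ'⟩ := ih hN'
    refine ⟨t'', c'.cons a, γ'', β'', hN'', by simp [hlen], ?_, ?_⟩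
    · rw [← Path.comp_toPath_eq_cons, Path.comp_assoc, hγ, Path.comp_cons, hγ', Path.comp_cons]
    · rw [← Path.comp_toPath_eq_cons, Path.comp_assoc, hβ, Path.comp_cons, hβ', Path.comp_cons]

lemma exists_pair_of_path_from_tgt (h : IsRotationClosed N) (hN : N γ β) (c : Path t u)
    (hc : c.length = β.length) : ∃ γ' : Path t u, N γ' c ∧ γ.comp c = β.comp γ' := by
  obtain ⟨s', c', γ', β', hN', hlen, hγ, hβ⟩ := h.exists_comp_right_eq hN c
  cases sigma_mk_eq_of_comp_eq_comp hβ (hc.symm.trans hlen.symm)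
  exact ⟨γ', hN', hγ⟩

lemma exists_pair_of_path_to_src (h : IsRotationClosed N) (hN : N γ β) (c : Path u s)
    (hc : c.length = β.length) : ∃ γ' : Path u s, N γ' c := by
  obtain ⟨t', c', γ', β', hN', hlen, -, hβ⟩ := h.exists_comp_left_eq hN c
  have hβlen := congrArg Path.length hβ
  simp only [Path.length_comp] at hβlen
  cases sigma_mk_eq_of_comp_eq_comp hβ (by omega)
  exact ⟨γ', hN'⟩

lemma exists_cycle_prefix (hout : ∀ v : V, ∃ w, Nonempty (v ⟶ w)) (h : IsRotationClosed N)
    (hN : N γ β) (hle : γ.length ≤ β.length) :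
    ∃ r : Path t t, β = γ.comp r ∧
      ∀ {u : V} (c : Path t u), c.length = β.length → ∃ c' : Path t u, c = r.comp c' := by
  have prefix_of (u : V) (c : Path t u) (hc : c.length = β.length) :
      ∃ r : Path t t, β = γ.comp r ∧ ∃ c' : Path t u, c = r.comp c' := by
    obtain ⟨γ', -, hγ⟩ := h.exists_pair_of_path_from_tgt hN c hc
    obtain ⟨r, hr, hc'⟩ := exists_eq_comp_of_comp_eq_comp hγ hle
    exact ⟨r, hr, γ', hc'⟩
  obtain ⟨u, c, hc⟩ := exists_path_from_of_length hout β.length t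
  obtain ⟨r, hr, -⟩ := prefix_of u c hc
  refine ⟨r, hr, fun c hc => ?_⟩
  obtain ⟨r', hr', hc'⟩ := prefix_of _ c hc
  rwa [Path.comp_injective_right γ (hr.symm.trans hr')]

lemma subsingleton_out (hout : ∀ v : V, ∃ w, Nonempty (v ⟶ w)) (h : IsRotationClosed N)
    (hN : N γ β) (hlt : γ.length < β.length) : Subsingleton (Σ w, t ⟶ w) := by
  obtain ⟨r, rfl, hr⟩ := h.exists_cycle_prefix hout hN hlt.le
  rw [Path.length_comp] at hlt hr
  obtain ⟨v, b, r, rfl, -⟩ := (Path.length_ne_zero_iff_eq_comp r).1 (by omega)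
  suffices ∀ e : Σ w, t ⟶ w, e = ⟨v, b⟩ from ⟨fun e e' => (this e).trans (this e').symm⟩
  rintro ⟨w, a⟩
  obtain ⟨u, c, hc⟩ := exists_path_from_of_length hout (γ.length + r.length) w
  obtain ⟨c', hc'⟩ := hr (a.toPath.comp c) (by simp [hc]; omega)
  rw [Path.comp_assoc] at hc'
  cases sigma_mk_eq_of_toPath_comp_eq_toPath_comp hc'
  rfl

lemma exists_pair_with_tgt [Subsingleton (WeaklyConnectedComponent V)]
    (hin : ∀ v : V, ∃ u, Nonempty (u ⟶ v)) (hout : ∀ v : V, ∃ w, Nonempty (v ⟶ w))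
    (h : IsRotationClosed N) (hN : N γ β) (v : V) : ∃ (s : V) (γ β : Path s v), N γ β := by
  have src_of_tgt {v : V} (hv : ∃ (s : V) (γ β : Path s v), N γ β) :
      ∃ (t : V) (γ β : Path v t), N γ β := by
    obtain ⟨s, γ, β, hN⟩ := hv
    obtain ⟨u, c, hc⟩ := exists_path_from_of_length hout β.length v
    obtain ⟨γ', hN', -⟩ := h.exists_pair_of_path_from_tgt hN c hc
    exact ⟨u, γ', c, hN'⟩
  have tgt_of_src {v : V} (hv : ∃ (t : V) (γ β : Path v t), N γ β) :
      ∃ (s : V) (γ β : Path s v), N γ β := by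
    obtain ⟨t, γ, β, hN⟩ := hv
    obtain ⟨u, c, hc⟩ := exists_path_to_of_length hin β.length v
    obtain ⟨γ', hN'⟩ := h.exists_pair_of_path_to_src hN c hc
    exact ⟨u, γ', c, hN'⟩
  refine mem_of_forall_hom_mem_iff (S := {v | ∃ (s : V) (γ β : Path s v), N γ β})
    ⟨s, γ, β, hN⟩ (fun {a b} e => ⟨?_, fun hb => ?_⟩) v
  · rintro ⟨s, γ, β, hN⟩
    obtain ⟨s', -, γ', β', hN', -⟩ := h.exists_cons_eq hN e
    exact ⟨s', γ', β', hN'⟩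
  · obtain ⟨t, γ, β, hN⟩ := src_of_tgt hb
    obtain ⟨t', -, γ', β', hN', -⟩ := h.exists_toPath_comp_eq hN e
    exact tgt_of_src ⟨t', γ', β', hN'⟩

lemma isCrown {V : Type} [Quiver V] [Finite V] {N : ∀ ⦃s t : V⦄, Path s t → Path s t → Prop}
    (hconn : QuiverConnected V) (hns : NoSourcesOrSinks V) (h : IsRotationClosed N)
    (hlt : ∀ {s t : V} {γ β : Path s t}, N γ β → γ.length < β.length)
    {s t : V} {γ β : Path s t} (hN : N γ β) : IsCrown V := by
  have := hconn.2
  refine isCrown_of_unique_out hconn hns fun v => ?_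
  obtain ⟨_, _, _, hN'⟩ := h.exists_pair_with_tgt (fun v => (hns v).1) (fun v => (hns v).2) hN v
  exact h.subsingleton_out (fun v => (hns v).2) hN' (hlt hN')

end IsRotationClosed

/-! ### The kernel of `D` -/

section FiberSum

variable {k ι κ : Type*} {F : ι → Type*} [Semiring k] [∀ i, Fintype (F i)]

/-- The linear map `i ↦ ∑ v, g ⟨i, v⟩` on free modules; the two halves of `D` are of this form,
with `v` running over the arrows at one end of the pair `i`. -/
noncomputable def fiberSum (k : Type*) [Semiring k] (g : (Σ i, F i) → κ) :
    (ι →₀ k) →ₗ[k] (κ →₀ k) :=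
  Finsupp.linearCombination k fun i => ∑ v : F i, Finsupp.single (g ⟨i, v⟩) 1

lemma fiberSum_apply (g : (Σ i, F i) → κ) (x : ι →₀ k) (y : κ) :
    fiberSum k g x y = x.sum fun i r => r * ∑ v : F i, Finsupp.single (g ⟨i, v⟩) (1 : k) y := by
  simp only [fiberSum, Finsupp.linearCombination_apply, Finsupp.sum_apply, Finsupp.smul_apply,
    Finsupp.finsetSum_apply, smul_eq_mul]

lemma fiberSum_apply_of_injective {g : (Σ i, F i) → κ} (hg : Function.Injective g) (x : ι →₀ k)
    (i : ι) (v : F i) : fiberSum k g x (g ⟨i, v⟩) = x i := by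
  classical
  rw [fiberSum_apply, Finsupp.sum_eq_single i]
  · simp [Finsupp.single_apply, hg.eq_iff]
  · intro j _ hj
    simp [hg.eq_iff, hj]
  · exact fun _ => zero_mul _

lemma exists_of_fiberSum_apply_ne_zero {g : (Σ i, F i) → κ} {x : ι →₀ k} {y : κ}
    (hy : fiberSum k g x y ≠ 0) : ∃ (i : ι) (v : F i), x i ≠ 0 ∧ g ⟨i, v⟩ = y := by
  rw [fiberSum_apply] at hy
  obtain ⟨i, hi, hne⟩ := Finset.exists_ne_zero_of_sum_ne_zero hy
  obtain ⟨v, -, hv⟩ := Finset.exists_ne_zero_of_sum_ne_zero (right_ne_zero_of_mul hne)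
  exact ⟨i, v, Finsupp.mem_support_iff.1 hi, (Finsupp.single_apply_ne_zero.1 hv).1.symm⟩

lemma exists_eq_of_fiberSum_eq_smul_fiberSum {G : ι → Type*} [∀ i, Fintype (G i)]
    {g : (Σ i, F i) → κ} {h : (Σ i, G i) → κ} (hg : Function.Injective g) {x : ι →₀ k} {c : k}
    (hx : fiberSum k g x = c • fiberSum k h x) {i : ι} (hi : x i ≠ 0) (v : F i) :
    ∃ (j : ι) (w : G j), x j ≠ 0 ∧ h ⟨j, w⟩ = g ⟨i, v⟩ := by
  rw [← fiberSum_apply_of_injective hg x i v, hx, Finsupp.smul_apply] at hi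
  exact exists_of_fiberSum_apply_ne_zero (right_ne_zero_of_smul hi)

end FiberSum

section Kernel

variable {V : Type} [Quiver V] {m p : ℕ}

/-- The pair `(aγ, aβ)` obtained from `(γ, β)` by adding an arrow `a` at the target.  The pair and
the arrow are bundled, so that injectivity says that `(aγ, aβ)` determines `γ`, `β` and `a`. -/
def ParPair.extendTgt (w : Σ z : ParPair V m p, Σ c, z.tgt ⟶ c) : ParPair V (m + 1) (p + 1) :=
  ⟨w.1.src, w.2.1, w.1.γ.cons w.2.2, w.1.β.cons w.2.2, by simp [w.1.hγ], by simp [w.1.hβ]⟩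

/-- The pair `(γa, βa)` obtained from `(γ, β)` by adding an arrow `a` at the source, bundled as in
`ParPair.extendTgt`. -/
def ParPair.extendSrc (w : Σ z : ParPair V m p, Σ c, c ⟶ z.src) : ParPair V (m + 1) (p + 1) :=
  ⟨w.2.1, w.1.tgt, w.2.2.toPath.comp w.1.γ, w.2.2.toPath.comp w.1.β,
    by simp [w.1.hγ, add_comm], by simp [w.1.hβ, add_comm]⟩

lemma ParPair.extendTgt_injective :
    Function.Injective (ParPair.extendTgt : (Σ z : ParPair V m p, Σ c, z.tgt ⟶ c) → _) := by
  rintro ⟨⟨s, t, γ, β, _, _⟩, c, a⟩ ⟨⟨s', t', γ', β', _, _⟩, c', a'⟩ h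
  simp only [ParPair.extendTgt, ParPair.mk.injEq] at h
  obtain ⟨rfl, rfl, hγ, hβ⟩ := h
  cases eq_of_heq hγ
  cases eq_of_heq hβ
  rfl

lemma ParPair.extendSrc_injective :
    Function.Injective (ParPair.extendSrc : (Σ z : ParPair V m p, Σ c, c ⟶ z.src) → _) := by
  rintro ⟨⟨s, t, γ, β, _, _⟩, c, a⟩ ⟨⟨s', t', γ', β', _, _⟩, c', a'⟩ h
  simp only [ParPair.extendSrc, ParPair.mk.injEq] at h
  obtain ⟨rfl, rfl, hγ, hβ⟩ := h
  cases sigma_mk_eq_of_toPath_comp_eq_toPath_comp (eq_of_heq hγ)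
  cases sigma_mk_eq_of_toPath_comp_eq_toPath_comp (eq_of_heq hβ)
  rfl

/-- The pair `(γ, β)` has the lengths `m`, `p` and lies in the support of `x`.  This turns the
support into a relation on paths of any length, so that no length proofs have to be carried
along when paths are rotated. -/
def IsSupportPair {k : Type*} [Zero k] (x : ParPair V m p →₀ k) ⦃s t : V⦄ (γ β : Path s t) :
    Prop :=
  ∃ (hγ : γ.length = m) (hβ : β.length = p), x ⟨s, t, γ, β, hγ, hβ⟩ ≠ 0

variable {k : Type} [Field k] [Fintype V] [∀ a b : V, Fintype (a ⟶ b)]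

lemma Dmap_eq_fiberSum : Dmap k V m p =
    fiberSum k ParPair.extendTgt + (-1 : k) ^ (p + m + 1) • fiberSum k ParPair.extendSrc := by
  refine Finsupp.lhom_ext' fun z => LinearMap.ext_ring ?_
  simp [Dmap, fiberSum, Fintype.sum_sigma, ParPair.extendTgt, ParPair.extendSrc]

lemma isRotationClosed_isSupportPair {x : ParPair V m p →₀ k} (hx : Dmap k V m p x = 0) :
    IsRotationClosed (IsSupportPair x) := by
  set ε : k := (-1) ^ (p + m + 1) with hε
  have hεε : ε * ε = 1 := by rw [hε, ← mul_pow, neg_one_mul, neg_neg, one_pow]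
  rw [Dmap_eq_fiberSum, LinearMap.add_apply, LinearMap.smul_apply, ← hε] at hx
  have htgt : fiberSum k ParPair.extendTgt x = (-ε) • fiberSum k ParPair.extendSrc x := by
    rw [neg_smul, eq_neg_of_add_eq_zero_left hx]
  have hsrc : fiberSum k ParPair.extendSrc x = (-ε) • fiberSum k ParPair.extendTgt x := by
    rw [htgt, smul_smul, neg_mul_neg, hεε, one_smul]
  constructor
  · rintro s t u γ β ⟨hγ, hβ, hne⟩ a
    obtain ⟨⟨s', t', γ', β', hγ', hβ'⟩, ⟨d, b⟩, hne', heq⟩ :=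
      exists_eq_of_fiberSum_eq_smul_fiberSum ParPair.extendTgt_injective htgt hne ⟨u, a⟩
    simp only [ParPair.extendTgt, ParPair.extendSrc, ParPair.mk.injEq] at heq
    obtain ⟨rfl, rfl, hγa, hβa⟩ := heq
    exact ⟨s', b, γ', β', ⟨hγ', hβ', hne'⟩, (eq_of_heq hγa).symm, (eq_of_heq hβa).symm⟩
  · rintro s t u γ β ⟨hγ, hβ, hne⟩ b
    obtain ⟨⟨s', t', γ', β', hγ', hβ'⟩, ⟨d, a⟩, hne', heq⟩ :=
      exists_eq_of_fiberSum_eq_smul_fiberSum ParPair.extendSrc_injective hsrc hne ⟨u, b⟩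
    simp only [ParPair.extendTgt, ParPair.extendSrc, ParPair.mk.injEq] at heq
    obtain ⟨rfl, rfl, hγb, hβb⟩ := heq
    exact ⟨t', a, γ', β', ⟨hγ', hβ', hne'⟩, (eq_of_heq hγb).symm, (eq_of_heq hβb).symm⟩

end Kernel

theorem D_injective_general (k : Type) [Field k] (V : Type) [Quiver V] [Fintype V]
    [∀ a b : V, Fintype (a ⟶ b)]
    (hconn : QuiverConnected V) (hns : NoSourcesOrSinks V) (hcrown : ¬ IsCrown V)
    (m p : ℕ) (hmp : m ≠ p) :
    Function.Injective ⇑(Dmap k V m p) := by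
  rw [injective_iff_map_eq_zero]
  intro x hx
  by_contra hne
  obtain ⟨⟨s, t, γ, β, hγ, hβ⟩, hz⟩ := Finsupp.ne_iff.1 hne
  have hN : IsSupportPair x γ β := ⟨hγ, hβ, hz⟩
  have hrot := isRotationClosed_isSupportPair hx
  refine hcrown ?_
  rcases hmp.lt_or_gt with h | h
  · exact hrot.isCrown hconn hns (fun ⟨hγ, hβ, _⟩ => by rwa [hγ, hβ]) hN
  · exact hrot.swap.isCrown hconn hns (fun ⟨hγ, hβ, _⟩ => by rwa [hγ, hβ]) hN

/-- for a field `k` and a finite connected quiver `Q` without sources or sinks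
which is not a crown, for all `m, p ≥ 1` with `m ≠ p` the linear map
`D_{m,p} : k(Q_m//Q_p) → k(Q_{m+1}//Q_{p+1})` is injective. -/
theorem D_injective (k : Type) [Field k] (V : Type) [Quiver V] [Fintype V]
    [∀ a b : V, Fintype (a ⟶ b)]
    (hconn : QuiverConnected V) (hns : NoSourcesOrSinks V) (hcrown : ¬ IsCrown V)
    (m p : ℕ) (hm : 1 ≤ m) (hp : 1 ≤ p) (hmp : m ≠ p) :
    Function.Injective ⇑(Dmap k V m p) := by
  exact D_injective_general k V hconn hns hcrown m p hmp
end

section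
/- Let Q be a finite connected quiver without sources or sinks and let m ≥ 1. Define a relation ∼ on the set Q_m of paths of length m by: γ ∼ γ′ if and only if there exist arrows α, β ∈ Q₁ and a path p of length m−1 such that γ is the concatenation in which α is traversed first followed by p, and γ′ is the concatenation in which p is traversed first followed by β. Then the equivalence relation generated by ∼ relates any two paths of length m: for all γ, γ′ ∈ Q_m, γ and γ′ lie in the same equivalence class. -/
/-!
Sliding a window of length `m` along a path one arrow at a time is a chain of `∼`-steps, so the
initial and the final segment of length `m` of any path are equivalent. Hence `x` is equivalent to
`y` as soon as some path joins the end of `x` to the start of `y`. Since there are no sources, some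
path `z` of length `m` ends where `x` starts; if the start of `y` is reachable from there, then `z`
is equivalent to both `x` and `y`. So the class of a path depends only on its starting vertex and is
the same for both ends of an arrow, and connectedness finishes the proof.
-/

open Quiver

/-- A path of length `m` in `Q`, together with its endpoints. -/
structure APath (V : Type) [Quiver V] (m : ℕ) where
  src : V
  tgt : V
  path : Quiver.Path src tgt
  hlen : path.length = m

/-- The relation `∼` on paths of length `m`: `x ∼ y` iff there are arrows `α, β` and a
path `p` of length `m − 1` such that `x` is "`α` traversed first, followed by `p`" and
`y` is "`p` traversed first, followed by `β`". -/
def SwapRel (V : Type) [Quiver V] (m : ℕ) (x y : APath V m) : Prop :=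
  ∃ (u v : V) (p : Quiver.Path u v) (x₀ : V) (α : x₀ ⟶ u) (y₀ : V) (β : v ⟶ y₀)
    (hp : p.length + 1 = m),
    x = ⟨x₀, v, (α.toPath).comp p,
          by
            simp only [Quiver.Path.length_comp, Quiver.Hom.toPath,
              Quiver.Path.length_cons, Quiver.Path.length_nil]
            omega⟩
      ∧ y = ⟨u, y₀, p.cons β, by simp only [Quiver.Path.length_cons]; omega⟩

lemma rel_of_weaklyConnectedComponent_eq {V : Type*} [Quiver V] {r : V → V → Prop}
    (hr : Equivalence r) (harrow : ∀ ⦃u v : V⦄, (u ⟶ v) → r u v) {a b : V}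
    (hab : (a : WeaklyConnectedComponent V) = b) : r a b := by
  obtain ⟨p⟩ := (WeaklyConnectedComponent.eq a b).1 hab
  clear hab
  induction p with
  | nil => exact hr.refl a
  | cons _ e ih =>
    rcases e with e | e
    · exact hr.trans ih (harrow e)
    · exact hr.trans ih (hr.symm (harrow e))

namespace APath

variable {V : Type} [Quiver V] {m : ℕ}

lemma exists_src_eq (hout : ∀ v : V, ∃ w, Nonempty (v ⟶ w)) (m : ℕ) (v : V) :
    ∃ x : APath V m, x.src = v := by
  induction m with
  | zero => exact ⟨⟨v, v, .nil, rfl⟩, rfl⟩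
  | succ m ih =>
    obtain ⟨⟨_, w, p, hp⟩, rfl⟩ := ih
    obtain ⟨z, ⟨β⟩⟩ := hout w
    exact ⟨⟨_, z, p.cons β, congrArg (· + 1) hp⟩, rfl⟩

lemma exists_tgt_eq (hin : ∀ v : V, ∃ u, Nonempty (u ⟶ v)) (m : ℕ) (v : V) :
    ∃ x : APath V m, x.tgt = v := by
  induction m with
  | zero => exact ⟨⟨v, v, .nil, rfl⟩, rfl⟩
  | succ m ih =>
    obtain ⟨⟨u, _, p, hp⟩, rfl⟩ := ih
    obtain ⟨z, ⟨α⟩⟩ := hin u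
    refine ⟨⟨z, _, α.toPath.comp p, ?_⟩, rfl⟩
    rw [Path.length_comp, Path.length_toPath, hp, add_comm]

lemma eqvGen_swapRel_of_comp_eq_comp (hm : 1 ≤ m) {a b c d : V} {p : Path a b}
    (hp : p.length = m) (s : Path b d) (t : Path a c) {q : Path c d} (hq : q.length = m)
    (h : p.comp s = t.comp q) :
    Relation.EqvGen (SwapRel V m) ⟨a, b, p, hp⟩ ⟨c, d, q, hq⟩ := by
  induction s generalizing c with
  | nil =>
    have hlen : t.length = 0 := by
      have := congrArg Path.length h
      rw [Path.length_comp, Path.length_comp, Path.length_nil] at this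
      omega
    obtain rfl := t.eq_of_length_zero hlen
    obtain rfl := t.eq_nil_of_length_zero hlen
    rw [Path.comp_nil, Path.nil_comp] at h
    subst h
    exact .refl _
  | cons s β ih =>
    obtain ⟨_, q', β', rfl⟩ := q.length_ne_zero_iff_eq_cons.1 (by omega)
    rw [Path.comp_cons, Path.comp_cons] at h
    obtain rfl := Path.obj_eq_of_cons_eq_cons h
    obtain rfl := eq_of_heq (Path.hom_heq_of_cons_eq_cons h)
    have hinit : p.comp s = t.comp q' := eq_of_heq (Path.heq_of_cons_eq_cons h)
    rw [Path.length_cons] at hq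
    have hlen : t.length ≠ 0 := by
      have := congrArg Path.length hinit
      rw [Path.length_comp, Path.length_comp] at this
      omega
    obtain ⟨_, t', α, rfl⟩ := t.length_ne_zero_iff_eq_cons.1 hlen
    have hαq : (α.toPath.comp q').length = m := by
      rw [Path.length_comp, Path.length_toPath, add_comm, hq]
    have hshift : p.comp s = t'.comp (α.toPath.comp q') := by
      rw [hinit, ← Path.comp_assoc, Path.comp_toPath_eq_cons]
    have hstep : SwapRel V m ⟨_, _, α.toPath.comp q', hαq⟩ ⟨_, _, q'.cons β, hq⟩ :=
      ⟨_, _, q', _, α, _, β, hq, rfl, rfl⟩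
    exact (ih t' hαq hshift).trans _ _ _ (.rel _ _ hstep)

lemma eqvGen_swapRel_of_reachable_tgt_src (hm : 1 ≤ m) {x y : APath V m}
    (h : Reachable x.tgt y.src) : Relation.EqvGen (SwapRel V m) x y := by
  obtain ⟨r⟩ := h
  exact eqvGen_swapRel_of_comp_eq_comp hm x.hlen (r.comp y.path) (x.path.comp r) y.hlen
    (Path.comp_assoc ..).symm

lemma eqvGen_swapRel_of_reachable_src_src (hin : ∀ v : V, ∃ u, Nonempty (u ⟶ v)) (hm : 1 ≤ m)
    {x y : APath V m} (h : Reachable x.src y.src) : Relation.EqvGen (SwapRel V m) x y := by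
  obtain ⟨z, hz⟩ := exists_tgt_eq hin m x.src
  have hzx : Relation.EqvGen (SwapRel V m) z x :=
    eqvGen_swapRel_of_reachable_tgt_src hm (hz ▸ .refl _)
  have hzy : Relation.EqvGen (SwapRel V m) z y :=
    eqvGen_swapRel_of_reachable_tgt_src hm (hz ▸ h)
  exact hzx.symm.trans _ _ _ hzy

end APath

theorem swapRel_eqvGen_general (V : Type) [Quiver V]
    (hconn : QuiverConnected V) (hns : NoSourcesOrSinks V)
    (m : ℕ) (hm : 1 ≤ m) (x y : APath V m) :
    Relation.EqvGen (SwapRel V m) x y := by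
  have hequiv := Relation.EqvGen.is_equivalence (SwapRel V m)
  have hreach {x y : APath V m} (h : Reachable x.src y.src) : Relation.EqvGen (SwapRel V m) x y :=
    APath.eqvGen_swapRel_of_reachable_src_src (fun v => (hns v).1) hm h
  choose f hf using APath.exists_src_eq (fun v => (hns v).2) m
  have harrow (u v : V) (α : u ⟶ v) : Relation.EqvGen (SwapRel V m) (f u) (f v) :=
    hreach (by rw [hf, hf]; exact α.reachable)
  have hxy : Relation.EqvGen (SwapRel V m) (f x.src) (f y.src) :=
    rel_of_weaklyConnectedComponent_eq (hequiv.comap f) harrow (hconn.2.elim _ _)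
  have hx : Relation.EqvGen (SwapRel V m) x (f x.src) := hreach (by rw [hf])
  have hy : Relation.EqvGen (SwapRel V m) (f y.src) y := hreach (by rw [hf])
  exact hequiv.trans hx (hequiv.trans hxy hy)

/-- in a finite connected quiver without sources or sinks, the equivalence
relation generated by `∼` relates any two paths of length `m ≥ 1`. -/
theorem swapRel_eqvGen (V : Type) [Quiver V] [Fintype V] [∀ a b : V, Fintype (a ⟶ b)]
    (hconn : QuiverConnected V) (hns : NoSourcesOrSinks V)
    (m : ℕ) (hm : 1 ≤ m) (x y : APath V m) :
    Relation.EqvGen (SwapRel V m) x y :=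
  swapRel_eqvGen_general V hconn hns m hm x y
end

section
/- Let k be a field. For all m, n ≥ 1, A ∈ M_m(k) and B ∈ M_n(k), the bracket {·,·} is compatible with the stabilization maps θ: {θ_m(A), B} = θ_{m+n−1}({A, B}) in M_{m+n}(k), and likewise {A, θ_n(B)} = θ_{m+n−1}({A, B}). -/
/-!
Fix the size `N` of the ambient matrix algebra and write `θ` for a stabilization map. Since
`ι_i^N ∘ θ = ι_i^N`, replacing `A` by `θ A` or `B` by `θ B` in the bracket computed in `M_N(k)`
only adds commutators of blocks with disjoint index ranges, which vanish. On the other hand the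
corner embedding `ι_0` of `M_{m+n-1}(k)` into `M_{m+n}(k)` is multiplicative and carries blocks to
blocks, so it sends the bracket computed in the smaller algebra to the one computed in the larger.
-/

/-- `ι_i^N(A)`: the `N × N` matrix with the `m × m` matrix `A` placed as a diagonal block
in rows and columns `i+1, …, i+m` and all other entries zero. -/
def iota (k : Type) [Field k] {m : ℕ} (i N : ℕ) (A : Matrix (Fin m) (Fin m) k) :
    Matrix (Fin N) (Fin N) k :=
  Matrix.of fun r s =>
    if h : i ≤ (r : ℕ) ∧ (r : ℕ) < i + m ∧ i ≤ (s : ℕ) ∧ (s : ℕ) < i + m then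
      A ⟨(r : ℕ) - i, by omega⟩ ⟨(s : ℕ) - i, by omega⟩
    else 0

/-- The bracket `{A, B} := Σ_{i=0}^{n−1} [ι_i(A), ι_0(B)] + Σ_{i=1}^{m−1} [ι_0(A), ι_i(B)]`,
computed inside `M_N(k)` (with the intended size `N = m + n − 1`), where `[X, Y] = XY − YX`. -/
def matBracket (k : Type) [Field k] {m n : ℕ} (N : ℕ)
    (A : Matrix (Fin m) (Fin m) k) (B : Matrix (Fin n) (Fin n) k) :
    Matrix (Fin N) (Fin N) k :=
  (∑ i ∈ Finset.range n, (iota k i N A * iota k 0 N B - iota k 0 N B * iota k i N A))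
    + ∑ i ∈ Finset.Ico 1 m, (iota k 0 N A * iota k i N B - iota k i N B * iota k 0 N A)

section

variable (k : Type) [Field k] {m n : ℕ}

lemma iota_add (i N : ℕ) (A B : Matrix (Fin m) (Fin m) k) :
    iota k i N (A + B) = iota k i N A + iota k i N B := by
  ext r s
  simp only [iota, Matrix.of_apply, Matrix.add_apply]
  split_ifs <;> simp

lemma iota_iota {i M : ℕ} (h : i + m ≤ M) (j N : ℕ) (A : Matrix (Fin m) (Fin m) k) :
    iota k j N (iota k i M A) = iota k (j + i) N A := by
  ext r s
  simp only [iota, Matrix.of_apply, Nat.sub_sub]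
  split_ifs <;> first | rfl | omega

lemma iota_mul {i N : ℕ} (h : i + m ≤ N) (A B : Matrix (Fin m) (Fin m) k) :
    iota k i N (A * B) = iota k i N A * iota k i N B := by
  ext r s
  let e : Fin m → Fin N := fun t => ⟨i + t, by omega⟩
  have he : Function.Injective e := fun t u htu => by
    simpa [e, Fin.ext_iff] using htu
  have outside (t : Fin N) (ht : t ∉ Set.range e) : iota k i N A r t * iota k i N B t s = 0 := by
    have ht' : ¬(i ≤ (t : ℕ) ∧ (t : ℕ) < i + m) := fun hit =>
      ht ⟨⟨t - i, by omega⟩, Fin.ext (Nat.add_sub_cancel' hit.1)⟩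
    have hA : iota k i N A r t = 0 := dif_neg (by tauto)
    rw [hA, zero_mul]
  rw [Matrix.mul_apply,
    ← Fintype.sum_of_injective e he (fun t => iota k i N A r (e t) * iota k i N B (e t) s) _
      outside fun _ => rfl]
  by_cases hr : i ≤ (r : ℕ) ∧ (r : ℕ) < i + m <;> by_cases hs : i ≤ (s : ℕ) ∧ (s : ℕ) < i + m <;>
    simp [iota, e, hr, hs, Matrix.mul_apply, ← and_assoc]

/-- The embedding `ι_i^N` of matrix algebras, for a block that fits into size `N`. It is a
non-unital homomorphism: the identity goes to the projection onto the block. -/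
def iotaHom {i N : ℕ} (h : i + m ≤ N) :
    Matrix (Fin m) (Fin m) k →ₙ+* Matrix (Fin N) (Fin N) k where
  toFun := iota k i N
  map_mul' := iota_mul k h
  map_zero' := by ext; simp [iota]
  map_add' := iota_add k i N

@[simp]
lemma iotaHom_apply {i N : ℕ} (h : i + m ≤ N) (A : Matrix (Fin m) (Fin m) k) :
    iotaHom k h A = iota k i N A :=
  rfl

lemma iota_mul_iota_of_disjoint {i j : ℕ} (h : i + m ≤ j ∨ j + n ≤ i) (N : ℕ)
    (A : Matrix (Fin m) (Fin m) k) (B : Matrix (Fin n) (Fin n) k) :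
    iota k i N A * iota k j N B = 0 := by
  ext r s
  refine (Matrix.mul_apply ..).trans (Finset.sum_eq_zero fun t _ => ?_)
  simp only [iota, Matrix.of_apply]
  split_ifs <;> first | omega | simp

lemma lie_iota_iota_of_disjoint {i j : ℕ} (h : i + m ≤ j ∨ j + n ≤ i) (N : ℕ)
    (A : Matrix (Fin m) (Fin m) k) (B : Matrix (Fin n) (Fin n) k) :
    ⁅iota k i N A, iota k j N B⁆ = 0 := by
  rw [Ring.lie_def, iota_mul_iota_of_disjoint k h, iota_mul_iota_of_disjoint k h.symm, sub_zero]

lemma matBracket_eq_sum_lie (N : ℕ) (A : Matrix (Fin m) (Fin m) k)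
    (B : Matrix (Fin n) (Fin n) k) :
    matBracket k N A B = ∑ i ∈ Finset.range n, ⁅iota k i N A, iota k 0 N B⁆ +
      ∑ i ∈ Finset.Ico 1 m, ⁅iota k 0 N A, iota k i N B⁆ :=
  rfl

lemma matBracket_iota_zero_left {M : ℕ} (h : m ≤ M) (N : ℕ) (A : Matrix (Fin m) (Fin m) k)
    (B : Matrix (Fin n) (Fin n) k) :
    matBracket k N (iota k 0 M A) B = matBracket k N A B := by
  have hθ (i : ℕ) : iota k i N (iota k 0 M A) = iota k i N A := iota_iota k (by omega) i N A
  simp only [matBracket_eq_sum_lie, hθ]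
  congr 1
  refine (Finset.sum_subset (Finset.Ico_subset_Ico_right h) fun i hi hi' => ?_).symm
  rw [Finset.mem_Ico] at hi hi'
  exact lie_iota_iota_of_disjoint k (by omega) N A B

lemma matBracket_iota_zero_right {M : ℕ} (h : n ≤ M) (N : ℕ) (A : Matrix (Fin m) (Fin m) k)
    (B : Matrix (Fin n) (Fin n) k) :
    matBracket k N A (iota k 0 M B) = matBracket k N A B := by
  have hθ (i : ℕ) : iota k i N (iota k 0 M B) = iota k i N B := iota_iota k (by omega) i N B
  simp only [matBracket_eq_sum_lie, hθ]
  congr 1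
  refine (Finset.sum_subset (Finset.range_subset_range.2 h) fun i _ hi' => ?_).symm
  rw [Finset.mem_range] at hi'
  exact lie_iota_iota_of_disjoint k (by omega) N A B

lemma iota_zero_lie_iota_iota {i j M N : ℕ} (hi : i + m ≤ M) (hj : j + n ≤ M) (hMN : M ≤ N)
    (A : Matrix (Fin m) (Fin m) k) (B : Matrix (Fin n) (Fin n) k) :
    iota k 0 N ⁅iota k i M A, iota k j M B⁆ = ⁅iota k i N A, iota k j N B⁆ := by
  have h : 0 + M ≤ N := by omega
  rw [← iotaHom_apply k h, Ring.lie_def, map_sub, map_mul, map_mul, iotaHom_apply,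
    iotaHom_apply, iota_iota k hi, iota_iota k hj, zero_add, zero_add, Ring.lie_def]

lemma iota_zero_matBracket {M N : ℕ} (hm : m ≤ M) (hn : n ≤ M) (hmn : m + n ≤ M + 1)
    (hMN : M ≤ N) (A : Matrix (Fin m) (Fin m) k) (B : Matrix (Fin n) (Fin n) k) :
    iota k 0 N (matBracket k M A B) = matBracket k N A B := by
  have h : 0 + M ≤ N := by omega
  rw [matBracket_eq_sum_lie, matBracket_eq_sum_lie, ← iotaHom_apply k h, map_add, map_sum, map_sum]
  congr 1 <;> refine Finset.sum_congr rfl fun i hi => ?_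
  · rw [Finset.mem_range] at hi
    exact iota_zero_lie_iota_iota k (by omega) (by omega) hMN A B
  · rw [Finset.mem_Ico] at hi
    exact iota_zero_lie_iota_iota k (by omega) (by omega) hMN A B

end

/-- the bracket `{·,·}` is compatible with the stabilization maps
`θ_m(A) = ι_0^{m+1}(A)`: `{θ_m(A), B} = θ_{m+n−1}({A, B})` in `M_{m+n}(k)`, and likewise
`{A, θ_n(B)} = θ_{m+n−1}({A, B})`. -/
theorem matBracket_stabilization (k : Type) [Field k] (m n : ℕ) (hm : 1 ≤ m) (hn : 1 ≤ n)
    (A : Matrix (Fin m) (Fin m) k) (B : Matrix (Fin n) (Fin n) k) :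
    matBracket k (m + n) (iota k 0 (m + 1) A) B
        = iota k 0 (m + n) (matBracket k (m + n - 1) A B)
      ∧ matBracket k (m + n) A (iota k 0 (n + 1) B)
        = iota k 0 (m + n) (matBracket k (m + n - 1) A B) := by
  rw [iota_zero_matBracket k (by omega) (by omega) (by omega) (by omega)]
  exact ⟨matBracket_iota_zero_left k m.le_succ (m + n) A B,
    matBracket_iota_zero_right k n.le_succ (m + n) A B⟩
end

section
/- Let k be a field. For all m, n, p ≥ 1 and all A ∈ M_m(k), B ∈ M_n(k), C ∈ M_p(k): the bracket is skew-symmetric, {A, B} = −{B, A} in M_{m+n−1}(k), and satisfies the Jacobi identity {{A, B}, C} + {{B, C}, A} + {{C, A}, B} = 0 in M_{m+n+p−2}(k). Consequently {·,·} defines a Lie algebra structure on the graded space ⊕_{m ≥ 1} gl_m(k). -/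
/-!
Let `S` and `T` be the right and the left shift on sequences `ℕ → k`, so that `T S = 1`. Placing
`A ∈ M_m(k)` in the top left corner of an infinite zero matrix gives an endomorphism `E A`, and
`ι_i(A)` becomes the translate `S ^ i (E A) T ^ i`. Put `Â = ∑_{i ≥ 0} S ^ i (E A) T ^ i`, which
makes sense because only the terms with `i ≤ r` affect the `r`-th entry of a sequence. For the
same reason `X = Â` is the only solution of `X = E A + S X T`.

The injective linear map `A ↦ Â` turns the bracket into the commutator. Indeed `X ↦ S X T` is
multiplicative, so `S [Â, B̂] T = [Â - E A, B̂ - E B]`, that is,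
`[Â, B̂] = [Â, E B] + ([E A, B̂] - [E A, E B]) + S [Â, B̂] T`. In the first three terms only
finitely many translates meet the corner blocks, and what remains is exactly `E {A, B}`; by
uniqueness, `[Â, B̂]` is the sum of the translates of `E {A, B}`. Skew-symmetry and the Jacobi
identity are then those of the commutator.
-/

lemma lie_jacobi_left {L : Type*} [LieRing L] (x y z : L) :
    ⁅⁅x, y⁆, z⁆ + ⁅⁅y, z⁆, x⁆ + ⁅⁅z, x⁆, y⁆ = 0 := by
  rw [← lie_skew ⁅x, y⁆, ← lie_skew ⁅y, z⁆, ← lie_skew ⁅z, x⁆, ← neg_add, ← neg_add, neg_eq_zero,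
    ← add_rotate, lie_jacobi]

section Conjugation

lemma conj_mul_conj {M : Type*} [Monoid M] {S T : M} (hTS : T * S = 1) (x y : M) :
    S * x * T * (S * y * T) = S * (x * y) * T :=
  calc S * x * T * (S * y * T) = S * x * (T * S) * y * T := by simp only [mul_assoc]
    _ = S * (x * y) * T := by rw [hTS, mul_one, mul_assoc S]

lemma eq_sum_add_pow_conj {R : Type*} [Semiring R] {S T x a : R} (hx : x = a + S * x * T)
    (j : ℕ) : x = ∑ i ∈ Finset.range j, S ^ i * a * T ^ i + S ^ j * x * T ^ j := by
  induction j with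
  | zero => simp
  | succ j ih =>
    calc x = ∑ i ∈ Finset.range j, S ^ i * a * T ^ i + S ^ j * (a + S * x * T) * T ^ j := by
          rwa [← hx]
      _ = _ := by
          simp only [Finset.sum_range_succ, pow_succ S, pow_succ' T, mul_add, add_mul, mul_assoc,
            add_assoc]

attribute [local instance] LieRing.ofAssociativeRing

variable {R : Type*} [Ring R] {S T : R}

lemma lie_conj_conj (hTS : T * S = 1) (x y : R) : ⁅S * x * T, S * y * T⁆ = S * ⁅x, y⁆ * T := by
  simp only [Ring.lie_def, conj_mul_conj hTS, mul_sub, sub_mul]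

lemma lie_eq_sum_lie_pow_conj {a b y : R} {m : ℕ} (hy : y = b + S * y * T)
    (haS : a * S ^ m = 0) (hTa : T ^ m * a = 0) :
    ⁅a, y⁆ = ∑ i ∈ Finset.range m, ⁅a, S ^ i * b * T ^ i⁆ := by
  have tail_eq_zero : ⁅a, S ^ m * y * T ^ m⁆ = 0 := by
    rw [Ring.lie_def, mul_assoc _ _ a, hTa, ← mul_assoc, ← mul_assoc, haS]
    simp
  conv_lhs => rw [eq_sum_add_pow_conj hy m, lie_add, tail_eq_zero, add_zero, lie_sum]

lemma lie_eq_add_conj_lie (hTS : T * S = 1) {a b x y : R} (hx : x = a + S * x * T)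
    (hy : y = b + S * y * T) : ⁅x, y⁆ = ⁅x, b⁆ + (⁅a, y⁆ - ⁅a, b⁆) + S * ⁅x, y⁆ * T := by
  rw [← lie_conj_conj hTS, ← sub_eq_of_eq_add' hx, ← sub_eq_of_eq_add' hy]
  simp only [lie_sub, sub_lie]
  abel

lemma lie_eq_sum_add_conj_lie (hTS : T * S = 1) {a b x y : R} {m n : ℕ} (hm : 1 ≤ m)
    (hx : x = a + S * x * T) (hy : y = b + S * y * T)
    (haS : a * S ^ m = 0) (hTa : T ^ m * a = 0) (hbS : b * S ^ n = 0) (hTb : T ^ n * b = 0) :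
    ⁅x, y⁆ = ∑ i ∈ Finset.range n, ⁅S ^ i * a * T ^ i, b⁆
      + ∑ i ∈ Finset.Ico 1 m, ⁅a, S ^ i * b * T ^ i⁆ + S * ⁅x, y⁆ * T := by
  have lie_b : ⁅x, b⁆ = ∑ i ∈ Finset.range n, ⁅S ^ i * a * T ^ i, b⁆ := by
    rw [← lie_skew, lie_eq_sum_lie_pow_conj hx hbS hTb, ← Finset.sum_neg_distrib]
    simp only [lie_skew]
  -- The translate `i = 0` is already accounted for by the first sum.
  have a_lie : ⁅a, y⁆ - ⁅a, b⁆ = ∑ i ∈ Finset.Ico 1 m, ⁅a, S ^ i * b * T ^ i⁆ := by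
    rw [lie_eq_sum_lie_pow_conj hy haS hTa, Finset.sum_Ico_eq_sub _ hm]
    simp
  rw [← lie_b, ← a_lie]
  exact lie_eq_add_conj_lie hTS hx hy

end Conjugation

section Shift

variable (R : Type*) [Semiring R]

/-- The shift `(f₀, f₁, …) ↦ (0, f₀, f₁, …)` on sequences, the `S` of the argument. -/
noncomputable def rightShift : Module.End R (ℕ → R) :=
  Function.ExtendByZero.linearMap R Nat.succ

/-- The shift `(f₀, f₁, …) ↦ (f₁, f₂, …)` on sequences, the `T` of the argument. -/
def leftShift : Module.End R (ℕ → R) :=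
  LinearMap.funLeft R R Nat.succ

lemma rightShift_apply_zero (f : ℕ → R) : rightShift R f 0 = 0 :=
  Function.extend_apply' _ _ _ (by simp)

lemma rightShift_apply_succ (f : ℕ → R) (r : ℕ) : rightShift R f (r + 1) = f r :=
  Nat.succ_injective.extend_apply _ _ _

lemma leftShift_mul_rightShift : leftShift R * rightShift R = 1 :=
  LinearMap.ext fun f => funext fun r => rightShift_apply_succ R f r

lemma leftShift_pow_apply (i : ℕ) (f : ℕ → R) (r : ℕ) : (leftShift R ^ i) f r = f (r + i) := by
  induction i generalizing f with
  | zero => rfl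
  | succ i ih => rw [pow_succ, Module.End.mul_apply, ih]; rfl

lemma rightShift_pow_apply_add (i : ℕ) (f : ℕ → R) (r : ℕ) :
    (rightShift R ^ i) f (r + i) = f r := by
  induction i with
  | zero => rfl
  | succ i ih => rw [pow_succ', Module.End.mul_apply, ← add_assoc, rightShift_apply_succ, ih]

lemma rightShift_pow_apply_of_lt {i r : ℕ} (h : r < i) (f : ℕ → R) :
    (rightShift R ^ i) f r = 0 := by
  induction i generalizing r with
  | zero => omega
  | succ i ih =>
    rw [pow_succ', Module.End.mul_apply]
    cases r with
    | zero => exact rightShift_apply_zero R _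
    | succ r => rw [rightShift_apply_succ, ih (by omega)]

end Shift

section TranslateSum

variable (R : Type*) [CommSemiring R]

/-- The sum `∑_{i ≥ 0} S ^ i Y T ^ i` of all translates of `Y` along the diagonal. It is encoded
entrywise: the terms with `i > r` do not contribute to the entry with index `r`. -/
noncomputable def translateSum : Module.End R (ℕ → R) →ₗ[R] Module.End R (ℕ → R) where
  toFun Y := LinearMap.pi fun r => ∑ i ∈ Finset.range (r + 1),
    LinearMap.proj r ∘ₗ (rightShift R ^ i * Y * leftShift R ^ i)
  map_add' X Y := by
    ext f r
    simp [Finset.sum_add_distrib]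
  map_smul' c Y := by
    ext f r
    simp [Finset.mul_sum]

variable {R}

lemma translateSum_apply (Y : Module.End R (ℕ → R)) (f : ℕ → R) (r : ℕ) :
    translateSum R Y f r =
      ∑ i ∈ Finset.range (r + 1), (rightShift R ^ i * Y * leftShift R ^ i) f r := by
  simp [translateSum]

lemma translateSum_eq_add_conj (Y : Module.End R (ℕ → R)) :
    translateSum R Y = Y + rightShift R * translateSum R Y * leftShift R := by
  refine LinearMap.ext fun f => funext fun r => ?_
  cases r with
  | zero => simp [translateSum_apply, rightShift_apply_zero]
  | succ r =>
    rw [translateSum_apply, Finset.sum_range_succ', add_comm]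
    simp [translateSum_apply, rightShift_apply_succ, pow_succ' (rightShift R),
      pow_succ (leftShift R)]

end TranslateSum

section Uniqueness

lemma eq_zero_of_eq_conj_shift {R : Type*} [Semiring R] {D : Module.End R (ℕ → R)}
    (hD : D = rightShift R * D * leftShift R) : D = 0 := by
  refine LinearMap.ext fun f => funext fun r => ?_
  have hD' : D = 0 + rightShift R * D * leftShift R := by rwa [zero_add]
  rw [eq_sum_add_pow_conj hD' (r + 1)]
  simp [rightShift_pow_apply_of_lt]

variable {R : Type*} [CommRing R]

lemma translateSum_injective : Function.Injective (translateSum R) :=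
  Function.LeftInverse.injective
    (g := fun X => X - rightShift R * X * leftShift R)
    fun Y => sub_eq_of_eq_add (translateSum_eq_add_conj Y)

lemma eq_translateSum_of_eq_add_conj {X Y : Module.End R (ℕ → R)}
    (hX : X = Y + rightShift R * X * leftShift R) : X = translateSum R Y := by
  refine sub_eq_zero.1 (eq_zero_of_eq_conj_shift ?_)
  conv_lhs => rw [hX, translateSum_eq_add_conj Y]
  rw [add_sub_add_left_eq_sub, mul_sub, sub_mul]

end Uniqueness

section Corner

lemma funLeft_comp_extendByZero (R : Type*) [Semiring R] {ι η : Type*} {e : ι → η}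
    (he : Function.Injective e) :
    LinearMap.funLeft R R e ∘ₗ Function.ExtendByZero.linearMap R e = LinearMap.id :=
  LinearMap.ext fun f => Function.extend_comp he f 0

variable (R : Type*) [CommSemiring R]

/-- The endomorphism of the space of sequences given by the infinite matrix with `A` in its top
left corner and zeros elsewhere, the `E A` of the argument. -/
noncomputable def corner (m : ℕ) : Matrix (Fin m) (Fin m) R →ₙₐ[R] Module.End R (ℕ → R) where
  toFun A := Function.ExtendByZero.linearMap R Fin.val ∘ₗ Matrix.toLin' A ∘ₗ
    LinearMap.funLeft R R Fin.val
  map_smul' c A := by simp [LinearMap.smul_comp, LinearMap.comp_smul]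
  map_zero' := by simp
  map_add' A B := by simp [LinearMap.add_comp, LinearMap.comp_add]
  map_mul' A B := by
    have restrict_extend := funLeft_comp_extendByZero R (Fin.val_injective (n := m))
    rw [Matrix.toLin'_mul, Module.End.mul_eq_comp]
    simp only [LinearMap.comp_assoc]
    rw [← LinearMap.comp_assoc _ _ (LinearMap.funLeft R R Fin.val), restrict_extend,
      LinearMap.id_comp]

variable {R}

lemma corner_apply_val {m : ℕ} (A : Matrix (Fin m) (Fin m) R) (f : ℕ → R) (r : Fin m) :
    corner R m A f r = ∑ s, A r s * f s :=
  Fin.val_injective.extend_apply _ _ _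

lemma corner_apply_of_le {m r : ℕ} (h : m ≤ r) (A : Matrix (Fin m) (Fin m) R) (f : ℕ → R) :
    corner R m A f r = 0 :=
  Function.extend_apply' _ _ _ (by rintro ⟨s, rfl⟩; omega)

lemma corner_injective (m : ℕ) : Function.Injective (corner R m) := by
  intro A B h
  refine Matrix.toLin'.injective (LinearMap.ext fun v => funext fun r => ?_)
  have corner_extend_eq := congrFun (LinearMap.congr_fun h (Function.extend Fin.val v 0)) r
  simpa [corner_apply_val, Fin.val_injective.extend_apply, Matrix.mulVec, dotProduct]
    using corner_extend_eq

lemma corner_mul_rightShift_pow {m : ℕ} (A : Matrix (Fin m) (Fin m) R) :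
    corner R m A * rightShift R ^ m = 0 := by
  refine LinearMap.ext fun f => funext fun r => ?_
  rw [Module.End.mul_apply]
  obtain h | h := lt_or_ge r m
  · rw [corner_apply_val A _ ⟨r, h⟩]
    simp [rightShift_pow_apply_of_lt]
  · exact corner_apply_of_le h A _

lemma leftShift_pow_mul_corner {m : ℕ} (A : Matrix (Fin m) (Fin m) R) :
    leftShift R ^ m * corner R m A = 0 := by
  refine LinearMap.ext fun f => funext fun r => ?_
  rw [Module.End.mul_apply, leftShift_pow_apply, corner_apply_of_le (Nat.le_add_left m r)]
  rfl

variable (R) in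
/-- The map `A ↦ Â = ∑_{i ≥ 0} S ^ i (E A) T ^ i` of the argument. -/
noncomputable def cornerTranslateSum (m : ℕ) :
    Matrix (Fin m) (Fin m) R →ₗ[R] Module.End R (ℕ → R) :=
  translateSum R ∘ₗ (corner R m : Matrix (Fin m) (Fin m) R →ₗ[R] Module.End R (ℕ → R))

lemma cornerTranslateSum_injective {R : Type*} [CommRing R] (m : ℕ) :
    Function.Injective (cornerTranslateSum R m) :=
  translateSum_injective.comp (corner_injective m)

end Corner

section Bracket

variable {k : Type} [Field k] {m n N : ℕ}

lemma iota_apply_add_add (A : Matrix (Fin m) (Fin m) k) {i : ℕ} (h : i + m ≤ N) (r s : Fin m) :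
    iota k i N A ⟨r + i, by omega⟩ ⟨s + i, by omega⟩ = A r s := by
  have block : i ≤ r + i ∧ r + i < i + m ∧ i ≤ s + i ∧ s + i < i + m := by omega
  simp [iota, block]

lemma iota_apply_eq_zero (A : Matrix (Fin m) (Fin m) k) {i : ℕ} {r s : Fin N}
    (h : ¬(i ≤ (r : ℕ) ∧ (r : ℕ) < i + m ∧ i ≤ (s : ℕ) ∧ (s : ℕ) < i + m)) :
    iota k i N A r s = 0 :=
  dif_neg h

lemma corner_iota_apply_add (A : Matrix (Fin m) (Fin m) k) {i : ℕ} (h : i + m ≤ N) (f : ℕ → k)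
    (r : Fin m) : corner k N (iota k i N A) f (r + i) = ∑ s : Fin m, A r s * f (s + i) := by
  rw [corner_apply_val _ f ⟨r + i, by omega⟩]
  refine (Fintype.sum_of_injective (fun s : Fin m => (⟨s + i, by omega⟩ : Fin N))
    (fun s t hst => by simpa [Fin.ext_iff] using hst) _ _ (fun s hs => ?_) fun s => ?_).symm
  · rw [iota_apply_eq_zero, zero_mul]
    rintro ⟨-, -, his, hsm⟩
    exact hs ⟨⟨s - i, by omega⟩, Fin.ext (Nat.sub_add_cancel his)⟩
  · rw [iota_apply_add_add A h]

lemma corner_iota_apply_eq_zero (A : Matrix (Fin m) (Fin m) k) {i r : ℕ}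
    (h : ¬(i ≤ r ∧ r < i + m)) (f : ℕ → k) : corner k N (iota k i N A) f r = 0 := by
  obtain hr | hr := lt_or_ge r N
  · rw [corner_apply_val _ f ⟨r, hr⟩]
    refine Finset.sum_eq_zero fun s _ => ?_
    rw [iota_apply_eq_zero A (by tauto), zero_mul]
  · exact corner_apply_of_le hr _ f

lemma corner_iota (A : Matrix (Fin m) (Fin m) k) {i : ℕ} (h : i + m ≤ N) :
    corner k N (iota k i N A) = rightShift k ^ i * corner k m A * leftShift k ^ i := by
  refine LinearMap.ext fun f => funext fun r => ?_
  rw [Module.End.mul_apply, Module.End.mul_apply]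
  obtain hri | hir := lt_or_ge r i
  · rw [corner_iota_apply_eq_zero A (by omega), rightShift_pow_apply_of_lt k hri]
  obtain ⟨r, rfl⟩ := Nat.exists_eq_add_of_le' hir
  rw [rightShift_pow_apply_add]
  obtain hrm | hmr := lt_or_ge r m
  · rw [corner_iota_apply_add A h f ⟨r, hrm⟩, corner_apply_val A _ ⟨r, hrm⟩]
    simp only [leftShift_pow_apply]
  · rw [corner_iota_apply_eq_zero A (by omega), corner_apply_of_le hmr]

lemma corner_iota_zero (A : Matrix (Fin m) (Fin m) k) (h : m ≤ N) :
    corner k N (iota k 0 N A) = corner k m A := by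
  simpa using corner_iota (i := 0) A (by rwa [zero_add])

lemma corner_matBracket (hm : 1 ≤ m) (hn : 1 ≤ n) (hN : m + n ≤ N + 1)
    (A : Matrix (Fin m) (Fin m) k) (B : Matrix (Fin n) (Fin n) k) :
    corner k N (matBracket k N A B) =
      ∑ i ∈ Finset.range n, ⁅rightShift k ^ i * corner k m A * leftShift k ^ i, corner k n B⁆
        + ∑ i ∈ Finset.Ico 1 m,
          ⁅corner k m A, rightShift k ^ i * corner k n B * leftShift k ^ i⁆ := by
  simp only [matBracket, map_add, map_sum, map_sub, map_mul, Ring.lie_def,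
    corner_iota_zero A (show m ≤ N by omega), corner_iota_zero B (show n ≤ N by omega)]
  congr 1 <;> refine Finset.sum_congr rfl fun i hi => ?_
  · rw [corner_iota A (by have := Finset.mem_range.1 hi; omega)]
  · rw [corner_iota B (by have := Finset.mem_Ico.1 hi; omega)]

attribute [local instance] LieRing.ofAssociativeRing

lemma cornerTranslateSum_matBracket (hm : 1 ≤ m) (hn : 1 ≤ n) (hN : m + n ≤ N + 1)
    (A : Matrix (Fin m) (Fin m) k) (B : Matrix (Fin n) (Fin n) k) :
    cornerTranslateSum k N (matBracket k N A B) =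
      ⁅cornerTranslateSum k m A, cornerTranslateSum k n B⁆ := by
  refine (eq_translateSum_of_eq_add_conj ?_).symm
  rw [LinearMap.coe_coe, corner_matBracket hm hn hN]
  exact lie_eq_sum_add_conj_lie (leftShift_mul_rightShift k) hm
    (translateSum_eq_add_conj _) (translateSum_eq_add_conj _)
    (corner_mul_rightShift_pow A) (leftShift_pow_mul_corner A)
    (corner_mul_rightShift_pow B) (leftShift_pow_mul_corner B)

lemma matBracket_skew (hm : 1 ≤ m) (hn : 1 ≤ n) (hN : m + n ≤ N + 1)
    (A : Matrix (Fin m) (Fin m) k) (B : Matrix (Fin n) (Fin n) k) :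
    matBracket k N A B = -matBracket k N B A := by
  apply cornerTranslateSum_injective
  rw [map_neg, cornerTranslateSum_matBracket hm hn hN,
    cornerTranslateSum_matBracket hn hm (by omega), lie_skew]

lemma matBracket_jacobi {p : ℕ} (hm : 1 ≤ m) (hn : 1 ≤ n) (hp : 1 ≤ p)
    (hN : m + n + p ≤ N + 2) (A : Matrix (Fin m) (Fin m) k) (B : Matrix (Fin n) (Fin n) k)
    (C : Matrix (Fin p) (Fin p) k) :
    matBracket k N (matBracket k (m + n - 1) A B) C
      + matBracket k N (matBracket k (n + p - 1) B C) A
      + matBracket k N (matBracket k (p + m - 1) C A) B = 0 := by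
  have map_double {a b c : ℕ} (ha : 1 ≤ a) (hb : 1 ≤ b) (hc : 1 ≤ c) (h : a + b + c ≤ N + 2)
      (X : Matrix (Fin a) (Fin a) k) (Y : Matrix (Fin b) (Fin b) k)
      (Z : Matrix (Fin c) (Fin c) k) :
      cornerTranslateSum k N (matBracket k N (matBracket k (a + b - 1) X Y) Z) =
        ⁅⁅cornerTranslateSum k a X, cornerTranslateSum k b Y⁆, cornerTranslateSum k c Z⁆ := by
    rw [cornerTranslateSum_matBracket (by omega) hc (by omega),
      cornerTranslateSum_matBracket ha hb (by omega)]
  apply cornerTranslateSum_injective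
  rw [map_add, map_add, map_zero, map_double hm hn hp hN, map_double hn hp hm (by omega),
    map_double hp hm hn (by omega), lie_jacobi_left]

end Bracket

/-- the bracket `{·,·}` is skew-symmetric, `{A, B} = −{B, A}` in
`M_{m+n−1}(k)`, and satisfies the Jacobi identity
`{{A,B},C} + {{B,C},A} + {{C,A},B} = 0` in `M_{m+n+p−2}(k)`; consequently it defines a
Lie algebra structure on the graded space `⊕_{m ≥ 1} gl_m(k)`. -/
theorem matBracket_lie (k : Type) [Field k] (m n p : ℕ) (hm : 1 ≤ m) (hn : 1 ≤ n)
    (hp : 1 ≤ p) (A : Matrix (Fin m) (Fin m) k) (B : Matrix (Fin n) (Fin n) k)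
    (C : Matrix (Fin p) (Fin p) k) :
    matBracket k (m + n - 1) A B = - matBracket k (m + n - 1) B A
      ∧ matBracket k (m + n + p - 2) (matBracket k (m + n - 1) A B) C
          + matBracket k (m + n + p - 2) (matBracket k (n + p - 1) B C) A
          + matBracket k (m + n + p - 2) (matBracket k (p + m - 1) C A) B = 0 := by
  exact ⟨matBracket_skew hm hn (by omega) A B, matBracket_jacobi hm hn hp (by omega) A B C⟩
end

section
/- Let k be a commutative ring and let P be a k-linear non-symmetric PROP. Then the bracket [f, g] := f ⋆ g − (−1)^{(m−p)(n−q)} g ⋆ f makes the positive total space ⊕_{m,p ≥ 1} P(m, p), graded by deg f = m − p for f ∈ P(m, p), into a ℤ-graded Lie algebra: [f, g] ∈ P(m+n−1, p+q−1), the bracket is graded antisymmetric, [f, g] = −(−1)^{(m−p)(n−q)} [g, f], and the graded Jacobi identity (−1)^{(m−p)(l−r)} [[f, g], h] + (−1)^{(n−q)(m−p)} [[g, h], f] + (−1)^{(l−r)(n−q)} [[h, f], g] = 0 holds for all f ∈ P(m, p), g ∈ P(n, q), h ∈ P(l, r) with m, n, l, p, q, r ≥ 1. -/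
/-!
The Jacobi identity is reduced to that of the graded commutator in an associative ring.

For `f : P m p` of degree `d = m - p` let `S f` be the family of the signed sums
`S f N = Σ_a (-1)^{a d} id_a ⊙ f ⊙ id_{N-m-a}` over all positions of `f` on `N` wires, and let `T`
be the signed shift `(T X) N = (-1)^d id_1 ⊙ X (N - 1)` of families of degree `d`, which is
multiplicative for vertical composition. Since `(1 - T) (S f)` retains only the leftmost term
`f ⊙ id_{N-m}`, the operation `f ⋆ g` is the member of `(1 - T) (S f ∘ S g)` at `N = m + n - 1`, and
`[f, g]` is that of `(1 - T) [S f, S g]`.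

For `N ≥ m + n` the additional terms of `(1 - T) [S f, S g]` have `f` and `g` on disjoint wires and
cancel, so that this family continues `[f, g]` by idle wires on the right. Therefore the defect
`R = [S f, S g] - S [f, g]` satisfies `R N = (T R) N` for `N ≥ m + n - 1`: it is its member on
`m + n - 2` wires, moved to the far right. On `m + n + l - 2` wires it graded commutes with the
leftmost `h : P l r`. Consequently `[[f, g], h]` is a member of `(1 - T) [[S f, S g], S h]`, and the
cyclic sum vanishes.
-/

/-- Transport an element of a doubly-indexed family along equalities of the indices. -/
def pcast {P : ℕ → ℕ → Type} {m n m' n' : ℕ} (h1 : m = m') (h2 : n = n')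
    (x : P m n) : P m' n' := by
  subst h1; subst h2; exact x

/-- A `k`-linear non-symmetric PROP: a family of `k`-modules `P m n` together with
`k`-bilinear horizontal compositions `⊙` (associative, with unit `id_0`), `k`-bilinear
vertical compositions `∘` (associative, with identities `id_n`), such that
`id_m ⊙ id_n = id_{m+n}` and the interchange law holds. -/
structure LinearPROP (k : Type) [CommRing k] where
  P : ℕ → ℕ → Type
  [grp : ∀ m n, AddCommGroup (P m n)]
  [mod : ∀ m n, Module k (P m n)]
  hcomp : ∀ {m₁ n₁ m₂ n₂ : ℕ}, P m₁ n₁ →ₗ[k] P m₂ n₂ →ₗ[k] P (m₁ + m₂) (n₁ + n₂)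
  vcomp : ∀ {m n p : ℕ}, P n p →ₗ[k] P m n →ₗ[k] P m p
  ids : ∀ n : ℕ, P n n
  hcomp_assoc : ∀ {m₁ n₁ m₂ n₂ m₃ n₃ : ℕ} (f : P m₁ n₁) (g : P m₂ n₂) (h : P m₃ n₃),
    pcast (P := P) (add_assoc m₁ m₂ m₃) (add_assoc n₁ n₂ n₃) (hcomp (hcomp f g) h)
      = hcomp f (hcomp g h)
  hcomp_unit_left : ∀ {m n : ℕ} (f : P m n),
    pcast (P := P) (zero_add m) (zero_add n) (hcomp (ids 0) f) = f
  hcomp_unit_right : ∀ {m n : ℕ} (f : P m n), hcomp f (ids 0) = f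
  vcomp_assoc : ∀ {m n p q : ℕ} (f : P p q) (g : P n p) (h : P m n),
    vcomp (vcomp f g) h = vcomp f (vcomp g h)
  vcomp_id_left : ∀ {m n : ℕ} (f : P m n), vcomp (ids n) f = f
  vcomp_id_right : ∀ {m n : ℕ} (f : P m n), vcomp f (ids m) = f
  ids_hcomp : ∀ m n : ℕ, hcomp (ids m) (ids n) = ids (m + n)
  interchange : ∀ {m₁ n₁ p₁ m₂ n₂ p₂ : ℕ}
    (f₁ : P m₁ n₁) (g₁ : P n₁ p₁) (f₂ : P m₂ n₂) (g₂ : P n₂ p₂),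
    hcomp (vcomp g₁ f₁) (vcomp g₂ f₂) = vcomp (hcomp g₁ g₂) (hcomp f₁ f₂)

attribute [instance] LinearPROP.grp LinearPROP.mod

variable {k : Type} [CommRing k]

/-- The operation `f ⋆ g := Σ_{i=1}^{m} (−1)^{(i−1)(q−n)} f ⋆_i g
+ Σ_{i=1}^{q−1} (−1)^{i(p−m)} f ⋆_{−i} g`, where
`f ⋆_i g = (f ⊙ id^{⊙(q−1)}) ∘ (id^{⊙(i−1)} ⊙ g ⊙ id^{⊙(m−i)})` for `1 ≤ i ≤ m` and
`f ⋆_{−i} g = (id^{⊙i} ⊙ f ⊙ id^{⊙(q−1−i)}) ∘ (g ⊙ id^{⊙(m−1)})` for `1 ≤ i ≤ q−1`. -/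
noncomputable def LinearPROP.star (𝓟 : LinearPROP k) {m p n q : ℕ}
    (hm : 1 ≤ m) (hq : 1 ≤ q) (f : 𝓟.P m p) (g : 𝓟.P n q) :
    𝓟.P (m + n - 1) (p + q - 1) :=
  pcast (P := 𝓟.P) rfl (by omega)
    ((∑ i : Fin m, ((((i : ℕ) : ℤ) * ((q : ℤ) - (n : ℤ))).negOnePow : ℤ) •
        𝓟.vcomp (𝓟.hcomp f (𝓟.ids (q - 1)))
          (pcast (P := 𝓟.P) (show (i : ℕ) + n + (m - 1 - (i : ℕ)) = m + n - 1 by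
              have := i.isLt; omega)
            (show (i : ℕ) + q + (m - 1 - (i : ℕ)) = m + (q - 1) by
              have := i.isLt; omega)
            (𝓟.hcomp (𝓟.hcomp (𝓟.ids (i : ℕ)) g) (𝓟.ids (m - 1 - (i : ℕ))))))
      + ∑ i : Fin (q - 1), (((((i : ℕ) : ℤ) + 1) * ((p : ℤ) - (m : ℤ))).negOnePow : ℤ) •
          pcast (P := 𝓟.P) (show n + (m - 1) = m + n - 1 by omega) rfl
            (𝓟.vcomp
              (pcast (P := 𝓟.P)
                (show ((i : ℕ) + 1) + m + (q - 1 - ((i : ℕ) + 1)) = q + (m - 1) by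
                  have := i.isLt; omega)
                (show ((i : ℕ) + 1) + p + (q - 1 - ((i : ℕ) + 1)) = p + (q - 1) by
                  have := i.isLt; omega)
                (𝓟.hcomp (𝓟.hcomp (𝓟.ids ((i : ℕ) + 1)) f) (𝓟.ids (q - 1 - ((i : ℕ) + 1)))))
              (𝓟.hcomp g (𝓟.ids (m - 1)))))

/-- The bracket `[f, g] := f ⋆ g − (−1)^{(m−p)(n−q)} g ⋆ f`. -/
noncomputable def LinearPROP.brk (𝓟 : LinearPROP k) {m p n q : ℕ}
    (hm : 1 ≤ m) (hp : 1 ≤ p) (hn : 1 ≤ n) (hq : 1 ≤ q)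
    (f : 𝓟.P m p) (g : 𝓟.P n q) : 𝓟.P (m + n - 1) (p + q - 1) :=
  𝓟.star hm hq f g
    - (((((m : ℤ) - (p : ℤ)) * ((n : ℤ) - (q : ℤ))).negOnePow : ℤ) •
        pcast (P := 𝓟.P) (show n + m - 1 = m + n - 1 by omega)
          (show q + p - 1 = p + q - 1 by omega) (𝓟.star hn hp g f))

open DirectSum

/-! ### Graded commutators -/

section GradedComm

variable {A : Type*} [NonUnitalRing A]

/-- The graded commutator of families `X` and `Y` of degrees `d₁` and `d₂`. The `N`-th member of a
family of degree `d` is thought of as a morphism from `N` to `N - d`, so `X (N - d₂) * Y N` is the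
`N`-th member of the composite of `Y` followed by `X`. -/
def gradedComm (d₁ : ℤ) (X : ℤ → A) (d₂ : ℤ) (Y : ℤ → A) (N : ℤ) : A :=
  X (N - d₂) * Y N - (d₁ * d₂).negOnePow • (Y (N - d₁) * X N)

theorem gradedComm_sub_left (d₁ : ℤ) (X X' : ℤ → A) (d₂ : ℤ) (Y : ℤ → A) :
    gradedComm d₁ (X - X') d₂ Y = gradedComm d₁ X d₂ Y - gradedComm d₁ X' d₂ Y := by
  funext N
  simp only [gradedComm, Pi.sub_apply, sub_mul, mul_sub, smul_sub]
  abel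

theorem gradedComm_sub_right (d₁ : ℤ) (X : ℤ → A) (d₂ : ℤ) (Y Y' : ℤ → A) :
    gradedComm d₁ X d₂ (Y - Y') = gradedComm d₁ X d₂ Y - gradedComm d₁ X d₂ Y' := by
  funext N
  simp only [gradedComm, Pi.sub_apply, sub_mul, mul_sub, smul_sub]
  abel

theorem gradedComm_jacobi (a b c : ℤ) (X Y Z : ℤ → A) :
    (a * c).negOnePow • gradedComm (a + b) (gradedComm a X b Y) c Z
      + (b * a).negOnePow • gradedComm (b + c) (gradedComm b Y c Z) a X
      + (c * b).negOnePow • gradedComm (c + a) (gradedComm c Z a X) b Y = 0 := by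
  funext N
  simp only [Pi.add_apply, Pi.smul_apply, Pi.zero_apply, gradedComm, add_mul, Int.negOnePow_add,
    mul_comm b a, mul_comm c b, mul_comm c a, sub_sub, add_comm b a, add_comm c b, add_comm c a]
  rcases Int.units_eq_one_or (a * b).negOnePow with hab | hab <;>
    rcases Int.units_eq_one_or (b * c).negOnePow with hbc | hbc <;>
    rcases Int.units_eq_one_or (a * c).negOnePow with hac | hac <;>
    simp only [hab, hbc, hac, Units.smul_def] <;> push_cast <;> noncomm_ring

end GradedComm

/-! ### The total space of a PROP -/

namespace LinearPROP

/-- The total space `⨁ P m n` of a PROP, over all `m, n ≥ 0`. Inside it no transports between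
index pairs are needed. Vertical composition is its multiplication, horizontal composition is the
bilinear map `Total.hmul`. -/
def Total (𝓟 : LinearPROP k) : Type := ⨁ a : ℕ × ℕ, 𝓟.P a.1 a.2

namespace Total

noncomputable section

variable {𝓟 : LinearPROP k} {m n p q l r : ℕ}

instance : AddCommGroup (Total 𝓟) :=
  inferInstanceAs (AddCommGroup (⨁ a : ℕ × ℕ, 𝓟.P a.1 a.2))

instance : Module k (Total 𝓟) :=
  inferInstanceAs (Module k (⨁ a : ℕ × ℕ, 𝓟.P a.1 a.2))

/-- The inclusion of the summand `P m n`. -/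
def of : 𝓟.P m n →ₗ[k] Total 𝓟 :=
  DirectSum.lof k (ℕ × ℕ) (fun a => 𝓟.P a.1 a.2) (m, n)

theorem of_injective : Function.Injective (of : 𝓟.P m n → Total 𝓟) :=
  DirectSum.of_injective (β := fun a : ℕ × ℕ => 𝓟.P a.1 a.2) (m, n)

@[simp]
theorem of_pcast {m' n' : ℕ} (hm : m = m') (hn : n = n') (x : 𝓟.P m n) :
    of (pcast (P := 𝓟.P) hm hn x) = of x := by
  subst hm hn
  rfl

@[elab_as_elim]
theorem induction_on {motive : Total 𝓟 → Prop} (x : Total 𝓟) (zero : motive 0)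
    (of : ∀ (m n : ℕ) (y : 𝓟.P m n), motive (of y))
    (add : ∀ x y, motive x → motive y → motive (x + y)) : motive x :=
  DirectSum.induction_on (β := fun a : ℕ × ℕ => 𝓟.P a.1 a.2) x zero (fun a => of a.1 a.2) add

/-- The bilinear map on the total space with prescribed values on the summands. -/
def lift₂ (φ : ∀ a b : ℕ × ℕ, 𝓟.P a.1 a.2 →ₗ[k] 𝓟.P b.1 b.2 →ₗ[k] Total 𝓟) :
    Total 𝓟 →ₗ[k] Total 𝓟 →ₗ[k] Total 𝓟 :=
  DirectSum.toModule k (ℕ × ℕ) _ fun a =>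
    (DirectSum.toModule k (ℕ × ℕ) _ fun b => (φ a b).flip).flip

theorem lift₂_of_of (φ : ∀ a b : ℕ × ℕ, 𝓟.P a.1 a.2 →ₗ[k] 𝓟.P b.1 b.2 →ₗ[k] Total 𝓟)
    (x : 𝓟.P m p) (y : 𝓟.P n q) : lift₂ φ (of x) (of y) = φ (m, p) (n, q) x y := by
  have left := DirectSum.toModule_lof k (φ := fun a => (DirectSum.toModule k (ℕ × ℕ)
    (𝓟.P a.1 a.2 →ₗ[k] Total 𝓟) fun b => (φ a b).flip).flip) (m, p) x
  have right := DirectSum.toModule_lof k (φ := fun b => (φ (m, p) b).flip) (n, q) y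
  exact (LinearMap.congr_fun left (of y)).trans (LinearMap.congr_fun right x)

/-- Vertical composition on the total space, set to be `0` on summands that are not composable. -/
def vmul : Total 𝓟 →ₗ[k] Total 𝓟 →ₗ[k] Total 𝓟 :=
  lift₂ fun a b =>
    if h : a.1 = b.2 then
      ((h ▸ 𝓟.vcomp : 𝓟.P a.1 a.2 →ₗ[k] 𝓟.P b.1 b.2 →ₗ[k] 𝓟.P b.1 a.2)).compr₂ of
    else 0

/-- Horizontal composition on the total space. -/
def hmul : Total 𝓟 →ₗ[k] Total 𝓟 →ₗ[k] Total 𝓟 :=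
  lift₂ fun _ _ => 𝓟.hcomp.compr₂ of

local notation:75 x:75 "⊙" y:76 => hmul x y

instance : Mul (Total 𝓟) := ⟨fun x y => vmul x y⟩

theorem mul_def (x y : Total 𝓟) : x * y = vmul x y := rfl

theorem of_mul_of (x : 𝓟.P n p) (y : 𝓟.P m n) : of x * of y = of (𝓟.vcomp x y) := by
  rw [mul_def, vmul, lift₂_of_of, dif_pos rfl]
  rfl

theorem of_mul_of_of_ne {n' : ℕ} (h : n ≠ n') (x : 𝓟.P n p) (y : 𝓟.P m n') :
    of x * of y = 0 := by
  rw [mul_def, vmul, lift₂_of_of, dif_neg h]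
  rfl

theorem of_hmul_of (x : 𝓟.P m p) (y : 𝓟.P n q) : of x ⊙ of y = of (𝓟.hcomp x y) := by
  rw [hmul, lift₂_of_of]
  rfl

instance : NonUnitalNonAssocRing (Total 𝓟) where
  left_distrib x y z := map_add (vmul x) y z
  right_distrib x y z := LinearMap.map_add₂ vmul x y z
  zero_mul x := LinearMap.map_zero₂ vmul x
  mul_zero x := map_zero (vmul x)

instance : NonUnitalRing (Total 𝓟) where
  mul_assoc x y z := by
    induction x using induction_on with
    | zero => simp only [zero_mul]
    | add x x' hx hx' => simp only [add_mul, hx, hx']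
    | of m p x =>
    induction y using induction_on with
    | zero => simp only [zero_mul, mul_zero]
    | add y y' hy hy' => simp only [add_mul, mul_add, hy, hy']
    | of n q y =>
    induction z using induction_on with
    | zero => simp only [mul_zero]
    | add z z' hz hz' => simp only [mul_add, hz, hz']
    | of l r z =>
    rcases eq_or_ne m q with rfl | hxy <;> rcases eq_or_ne n r with rfl | hyz <;>
      simp only [of_mul_of, of_mul_of_of_ne, zero_mul, mul_zero, ne_eq, not_false_eq_true,
        𝓟.vcomp_assoc, *]

instance : IsScalarTower k (Total 𝓟) (Total 𝓟) :=
  ⟨fun c x y => LinearMap.map_smul₂ vmul c x y⟩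

instance : SMulCommClass k (Total 𝓟) (Total 𝓟) :=
  ⟨fun c x y => (map_smul (vmul x) c y).symm⟩

theorem smul_hmul (c : ℤˣ) (x y : Total 𝓟) : (c • x) ⊙ y = c • (x ⊙ y) := by
  rw [LinearMap.map_smul_of_tower, LinearMap.smul_apply]

theorem hmul_smul (c : ℤˣ) (x y : Total 𝓟) : x ⊙ (c • y) = c • (x ⊙ y) :=
  LinearMap.map_smul_of_tower _ c y

theorem hmul_assoc (x y z : Total 𝓟) : (x ⊙ y) ⊙ z = x ⊙ (y ⊙ z) := by
  induction x using induction_on with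
  | zero => simp only [LinearMap.map_zero₂]
  | add x x' hx hx' => simp only [LinearMap.map_add₂, hx, hx']
  | of m p x =>
  induction y using induction_on with
  | zero => simp only [map_zero, LinearMap.zero_apply]
  | add y y' hy hy' => simp only [map_add, LinearMap.add_apply, hy, hy']
  | of n q y =>
  induction z using induction_on with
  | zero => simp only [map_zero]
  | add z z' hz hz' => simp only [map_add, hz, hz']
  | of l r z => simp only [of_hmul_of, ← 𝓟.hcomp_assoc, of_pcast]

/-- The identity `id_n`, indexed by integers and set to be `0` for `n < 0`. With this convention
terms of a sum that do not fit into the available width vanish by themselves. -/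
def idn (n : ℤ) : Total 𝓟 := if 0 ≤ n then of (𝓟.ids n.toNat) else 0

theorem idn_of_neg {i : ℤ} (hi : i < 0) : (idn i : Total 𝓟) = 0 := if_neg hi.not_ge

theorem idn_natCast (n : ℕ) : (idn n : Total 𝓟) = of (𝓟.ids n) := by simp [idn]

theorem idn_zero_hmul (x : Total 𝓟) : idn 0 ⊙ x = x := by
  rw [← Nat.cast_zero, idn_natCast]
  induction x using induction_on with
  | zero => rw [map_zero]
  | add x y hx hy => rw [map_add, hx, hy]
  | of m n x => rw [of_hmul_of, ← of_pcast (zero_add m) (zero_add n), 𝓟.hcomp_unit_left]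

theorem hmul_idn_zero (x : Total 𝓟) : x ⊙ idn 0 = x := by
  rw [← Nat.cast_zero, idn_natCast]
  induction x using induction_on with
  | zero => rw [LinearMap.map_zero₂]
  | add x y hx hy => rw [LinearMap.map_add₂, hx, hy]
  | of m n x => exact (of_hmul_of x _).trans (congrArg of (𝓟.hcomp_unit_right x))

theorem idn_hmul_idn {i j : ℤ} (hi : 0 ≤ i) (hj : 0 ≤ j) :
    (idn i ⊙ idn j : Total 𝓟) = idn (i + j) := by
  lift i to ℕ using hi
  lift j to ℕ using hj
  rw [← Nat.cast_add]
  simp only [idn_natCast, of_hmul_of, 𝓟.ids_hcomp]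

theorem of_mul_idn (x : 𝓟.P m n) (i : ℕ) : of x * idn i = if m = i then of x else 0 := by
  rw [idn_natCast]
  split_ifs with h
  · subst h
    rw [of_mul_of, 𝓟.vcomp_id_right]
  · rw [of_mul_of_of_ne h]

theorem idn_mul_of (x : 𝓟.P m n) (i : ℕ) : idn i * of x = if i = n then of x else 0 := by
  rw [idn_natCast]
  split_ifs with h
  · subst h
    rw [of_mul_of, 𝓟.vcomp_id_left]
  · rw [of_mul_of_of_ne h]

theorem idn_mul_idn (i : ℤ) : (idn i * idn i : Total 𝓟) = idn i := by
  rcases lt_or_ge i 0 with hi | hi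
  · rw [idn_of_neg hi, mul_zero]
  · lift i to ℕ using hi
    rw [idn_natCast, of_mul_of, 𝓟.vcomp_id_left]

/-! ### Homogeneous elements -/

variable (𝓟) in
/-- The component `P i j` of the total space, cut out by the idempotents `id_j` and `id_i`. It is
indexed by integers and is zero unless `i, j ≥ 0`. -/
def component (i j : ℤ) : Submodule k (Total 𝓟) where
  carrier := {x | idn j * x = x ∧ x * idn i = x}
  zero_mem' := ⟨mul_zero _, zero_mul _⟩
  add_mem' hx hy := ⟨by rw [mul_add, hx.1, hy.1], by rw [add_mul, hx.2, hy.2]⟩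
  smul_mem' c x hx := ⟨by rw [mul_smul_comm, hx.1], by rw [smul_mul_assoc, hx.2]⟩

theorem of_mem_component (x : 𝓟.P m n) : of x ∈ component 𝓟 m n := by
  constructor
  · rw [idn_mul_of, if_pos rfl]
  · rw [of_mul_idn, if_pos rfl]

theorem idn_mem_component (i : ℤ) : idn i ∈ component 𝓟 i i := ⟨idn_mul_idn i, idn_mul_idn i⟩

variable {i j i' j' s : ℤ} {x y : Total 𝓟}

theorem mul_mem_component (hy : y ∈ component 𝓟 j s) (hx : x ∈ component 𝓟 i j) :
    y * x ∈ component 𝓟 i s :=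
  ⟨by rw [← mul_assoc, hy.1], by rw [mul_assoc, hx.2]⟩

theorem idn_mul_mul_idn_mem_range_of (x : Total 𝓟) (m n : ℕ) :
    idn n * x * idn m ∈ LinearMap.range (of : 𝓟.P m n →ₗ[k] Total 𝓟) := by
  induction x using induction_on with
  | zero => simp
  | add x y hx hy =>
    rw [mul_add, add_mul]
    exact add_mem hx hy
  | of m' n' x =>
    rw [idn_mul_of]
    split_ifs with hn
    · rw [of_mul_idn]
      split_ifs with hm
      · subst hn hm
        exact LinearMap.mem_range_self of x
      · exact zero_mem _
    · rw [zero_mul]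
      exact zero_mem _

theorem eq_zero_or_exists_of_of_mem_component (hx : x ∈ component 𝓟 i j) :
    x = 0 ∨ ∃ (m n : ℕ) (y : 𝓟.P m n), i = m ∧ j = n ∧ x = of y := by
  rcases lt_or_ge i 0 with hi | hi
  · exact .inl (by rw [← hx.2, idn_of_neg hi, mul_zero])
  rcases lt_or_ge j 0 with hj | hj
  · exact .inl (by rw [← hx.1, idn_of_neg hj, zero_mul])
  lift i to ℕ using hi
  lift j to ℕ using hj
  obtain ⟨y, hy⟩ := idn_mul_mul_idn_mem_range_of x i j
  rw [hx.1, hx.2] at hy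
  exact .inr ⟨i, j, y, rfl, rfl, hy.symm⟩

theorem hmul_mem_component (hx : x ∈ component 𝓟 i j) (hy : y ∈ component 𝓟 i' j') :
    x ⊙ y ∈ component 𝓟 (i + i') (j + j') := by
  rcases eq_zero_or_exists_of_of_mem_component hx with rfl | ⟨m, p, x, rfl, rfl, rfl⟩
  · rw [LinearMap.map_zero₂]
    exact zero_mem _
  rcases eq_zero_or_exists_of_of_mem_component hy with rfl | ⟨n, q, y, rfl, rfl, rfl⟩
  · rw [map_zero]
    exact zero_mem _
  rw [of_hmul_of]
  exact_mod_cast of_mem_component _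

theorem mul_hmul_mul {s' : ℤ} {x' y' : Total 𝓟} (hy : y ∈ component 𝓟 j s)
    (hx : x ∈ component 𝓟 i j) (hy' : y' ∈ component 𝓟 j' s') (hx' : x' ∈ component 𝓟 i' j') :
    (y * x) ⊙ (y' * x') = (y ⊙ y') * (x ⊙ x') := by
  rcases eq_zero_or_exists_of_of_mem_component hy with rfl | ⟨_, _, y, rfl, rfl, rfl⟩
  · simp
  rcases eq_zero_or_exists_of_of_mem_component hx with rfl | ⟨_, _, x, rfl, hj, rfl⟩
  · simp
  rcases eq_zero_or_exists_of_of_mem_component hy' with rfl | ⟨_, _, y', rfl, rfl, rfl⟩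
  · simp
  rcases eq_zero_or_exists_of_of_mem_component hx' with rfl | ⟨_, _, x', rfl, hj', rfl⟩
  · simp
  obtain rfl := Nat.cast_injective hj
  obtain rfl := Nat.cast_injective hj'
  simp only [of_mul_of, of_hmul_of, 𝓟.interchange]

theorem idn_hmul_mul (hy : y ∈ component 𝓟 j s) (hx : x ∈ component 𝓟 i j) (t : ℤ) :
    idn t ⊙ (y * x) = (idn t ⊙ y) * (idn t ⊙ x) := by
  rw [← mul_hmul_mul (idn_mem_component t) (idn_mem_component t) hy hx, idn_mul_idn]

theorem mul_hmul_idn (hy : y ∈ component 𝓟 j s) (hx : x ∈ component 𝓟 i j) (t : ℤ) :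
    (y * x) ⊙ idn t = (y ⊙ idn t) * (x ⊙ idn t) := by
  rw [← mul_hmul_mul hy hx (idn_mem_component t) (idn_mem_component t), idn_mul_idn]

/-- Operations on disjoint wires may be carried out in either order. -/
theorem hmul_idn_mul_idn_hmul (hx : x ∈ component 𝓟 i j) (hy : y ∈ component 𝓟 i' j') :
    (x ⊙ idn j') * (idn i ⊙ y) = (idn j ⊙ y) * (x ⊙ idn i') := by
  rw [← mul_hmul_mul hx (idn_mem_component i) (idn_mem_component j') hy,
    ← mul_hmul_mul (idn_mem_component j) hx hy (idn_mem_component i'), hx.1, hx.2, hy.1, hy.2]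

/-! ### Graded families and the signed shift -/

variable (𝓟) in
/-- The families of degree `d`: those whose `N`-th member has `N` inputs and `N - d` outputs. -/
def gradedFamily (d : ℤ) : Submodule k (ℤ → Total 𝓟) where
  carrier := {X | ∀ N, X N ∈ component 𝓟 N (N - d)}
  zero_mem' _ := zero_mem _
  add_mem' hX hY N := add_mem (hX N) (hY N)
  smul_mem' c _ hX N := Submodule.smul_mem _ c (hX N)

/-- The signed shift of a family of degree `d`, which adds an idle wire on the left. -/
def shift (d : ℤ) : (ℤ → Total 𝓟) →ₗ[k] (ℤ → Total 𝓟) :=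
  LinearMap.pi fun N => d.negOnePow • hmul (idn 1) ∘ₗ LinearMap.proj (N - 1)

theorem shift_apply (d : ℤ) (X : ℤ → Total 𝓟) (N : ℤ) :
    shift d X N = d.negOnePow • (idn 1 ⊙ X (N - 1)) := rfl

/-- The operator `1 - T` on families of degree `d`, where `T` is the signed shift. It retains the
leftmost term of a signed sum over all positions. -/
def leftPart (d : ℤ) : (ℤ → Total 𝓟) →ₗ[k] (ℤ → Total 𝓟) := LinearMap.id - shift d

theorem leftPart_apply (d : ℤ) (X : ℤ → Total 𝓟) : leftPart d X = X - shift d X := rfl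

section

variable {d d₁ d₂ : ℤ} {X Y : ℤ → Total 𝓟}

theorem mul_mem_component_of_mem_gradedFamily (hX : X ∈ gradedFamily 𝓟 d₁)
    (hY : Y ∈ gradedFamily 𝓟 d₂) (N : ℤ) :
    X (N - d₂) * Y N ∈ component 𝓟 N (N - (d₁ + d₂)) := by
  rw [add_comm d₁, ← sub_sub]
  exact mul_mem_component (hX _) (hY N)

theorem gradedComm_mem_gradedFamily (hX : X ∈ gradedFamily 𝓟 d₁) (hY : Y ∈ gradedFamily 𝓟 d₂) :
    gradedComm d₁ X d₂ Y ∈ gradedFamily 𝓟 (d₁ + d₂) := fun N =>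
  sub_mem (mul_mem_component_of_mem_gradedFamily hX hY N) <| Submodule.smul_of_tower_mem _ _ <|
    add_comm d₁ d₂ ▸ mul_mem_component_of_mem_gradedFamily hY hX N

theorem shift_mul_shift (hX : X ∈ gradedFamily 𝓟 d₁) (hY : Y ∈ gradedFamily 𝓟 d₂) (N : ℤ) :
    shift d₁ X (N - d₂) * shift d₂ Y N =
      (d₁ + d₂).negOnePow • (idn 1 ⊙ (X (N - 1 - d₂) * Y (N - 1))) := by
  simp only [shift_apply]
  rw [idn_hmul_mul (hX _) (hY _), smul_mul_assoc, mul_smul_comm, smul_smul,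
    ← Int.negOnePow_add, sub_right_comm]

theorem leftPart_gradedComm (hX : X ∈ gradedFamily 𝓟 d₁) (hY : Y ∈ gradedFamily 𝓟 d₂) :
    leftPart (d₁ + d₂) (gradedComm d₁ X d₂ Y) =
      gradedComm d₁ X d₂ Y - gradedComm d₁ (shift d₁ X) d₂ (shift d₂ Y) := by
  rw [leftPart_apply, sub_right_inj]
  funext N
  rw [shift_apply, gradedComm, gradedComm, shift_mul_shift hX hY, shift_mul_shift hY hX, map_sub,
    hmul_smul, smul_sub, smul_comm (d₁ * d₂).negOnePow, add_comm d₂]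

theorem leftPart_gradedComm_of_leftPart_eq_zero (hX : X ∈ gradedFamily 𝓟 d₁)
    (hY : Y ∈ gradedFamily 𝓟 d₂) {N : ℤ} (hN : leftPart d₁ X N = 0)
    (hN' : leftPart d₁ X (N - d₂) = 0) :
    leftPart (d₁ + d₂) (gradedComm d₁ X d₂ Y) N = gradedComm d₁ X d₂ (leftPart d₂ Y) N := by
  rw [leftPart_apply, Pi.sub_apply, sub_eq_zero] at hN hN'
  rw [leftPart_gradedComm hX hY, leftPart_apply, gradedComm_sub_right, Pi.sub_apply, Pi.sub_apply]
  simp only [gradedComm, ← hN, ← hN']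

end

/-! ### Sums over all positions -/

/-- The degree `m - p` of an element of `P m p`. -/
def deg (_ : 𝓟.P m p) : ℤ := m - p

/-- `f` in the leftmost position on `N` wires, `f ⊙ id_{N-m}`; it is `0` for `N < m`. -/
def leftmost (f : 𝓟.P m p) (N : ℤ) : Total 𝓟 := of f ⊙ idn (N - m)

/-- `f` in the rightmost position on `N` wires, with its sign; it is `0` for `N < m`. -/
def rightmost (f : 𝓟.P m p) (N : ℤ) : Total 𝓟 :=
  ((N - m) * deg f).negOnePow • (idn (N - m) ⊙ of f)

/-- The signed sum `Σ_a (-1)^{a d} id_a ⊙ f ⊙ id_{N-m-a}` over all positions of `f` on `N` wires,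
where `d` is the degree of `f`. -/
def placements (f : 𝓟.P m p) (N : ℤ) : Total 𝓟 :=
  ∑ a ∈ Finset.range (N - m + 1).toNat, (a * deg f).negOnePow • (idn a ⊙ of f ⊙ idn (N - m - a))

section

variable (f : 𝓟.P m p) (g : 𝓟.P n q)

theorem leftmost_natCast_add (a : ℕ) : leftmost f (m + a) = of (𝓟.hcomp f (𝓟.ids a)) := by
  rw [leftmost, add_sub_cancel_left, idn_natCast, of_hmul_of]

theorem placements_natCast_add (a : ℕ) : placements f (m + a) = ∑ i ∈ Finset.range (a + 1),
    (i * deg f).negOnePow • of (𝓟.hcomp (𝓟.hcomp (𝓟.ids i) f) (𝓟.ids (a - i))) := by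
  rw [placements, add_sub_cancel_left]
  refine Finset.sum_congr rfl fun i hi => ?_
  rw [← Nat.cast_sub (Finset.mem_range_succ_iff.mp hi)]
  simp only [idn_natCast, of_hmul_of]

theorem placements_of_lt {N : ℤ} (hN : N < m) : placements f N = 0 := by
  rw [placements, Int.toNat_of_nonpos (by lia), Finset.sum_range_zero]

theorem leftmost_of_lt {N : ℤ} (hN : N < m) : leftmost f N = 0 := by
  rw [leftmost, idn_of_neg (by lia), map_zero]

theorem rightmost_of_lt {N : ℤ} (hN : N < m) : rightmost f N = 0 := by
  rw [rightmost, idn_of_neg (by lia), LinearMap.map_zero₂, smul_zero]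

theorem leftmost_mem_gradedFamily : leftmost f ∈ gradedFamily 𝓟 (deg f) := fun N => by
  rw [leftmost]
  convert hmul_mem_component (of_mem_component f) (idn_mem_component (N - m)) using 2
  · ring
  · unfold deg
    ring

theorem placements_mem_gradedFamily : placements f ∈ gradedFamily 𝓟 (deg f) := fun N =>
  sum_mem fun a _ => Submodule.smul_of_tower_mem _ _ <| by
    convert hmul_mem_component (hmul_mem_component (idn_mem_component a) (of_mem_component f))
      (idn_mem_component (N - m - a)) using 2
    · ring
    · unfold deg
      ring

theorem leftPart_placements : leftPart (deg f) (placements f) = leftmost f := by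
  rw [leftPart_apply, sub_eq_iff_eq_add]
  funext N
  rw [Pi.add_apply, shift_apply]
  rcases lt_or_ge N m with hN | hN
  · rw [placements_of_lt f hN, leftmost_of_lt f hN, placements_of_lt f (by lia), map_zero,
      smul_zero, add_zero]
  obtain ⟨a, rfl⟩ : ∃ a : ℕ, N = m + a := ⟨(N - m).toNat, by lia⟩
  rw [placements, placements, show (m + a - m + 1 : ℤ).toNat = a + 1 by lia,
    show (m + a - 1 - m + 1 : ℤ).toNat = a by lia, Finset.sum_range_succ', add_comm, map_sum,
    Finset.smul_sum]
  congr 1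
  · simp [leftmost, idn_zero_hmul]
  refine Finset.sum_congr rfl fun i _ => ?_
  rw [hmul_smul, ← hmul_assoc, ← hmul_assoc, idn_hmul_idn zero_le_one i.cast_nonneg, smul_smul,
    ← Int.negOnePow_add, Nat.cast_succ, add_one_mul, add_comm (deg f), add_comm (1 : ℤ),
    show (m + a - m - (i + 1) : ℤ) = m + a - 1 - m - i by ring]

theorem placements_eq_hmul_idn_one_add_rightmost (N : ℤ) :
    placements f N = placements f (N - 1) ⊙ idn 1 + rightmost f N := by
  rcases lt_or_ge N m with hN | hN
  · rw [placements_of_lt f hN, rightmost_of_lt f hN, placements_of_lt f (by lia),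
      LinearMap.map_zero₂, add_zero]
  obtain ⟨a, rfl⟩ : ∃ a : ℕ, N = m + a := ⟨(N - m).toNat, by lia⟩
  rw [placements, placements, show (m + a - m + 1 : ℤ).toNat = a + 1 by lia,
    show (m + a - 1 - m + 1 : ℤ).toNat = a by lia, Finset.sum_range_succ, LinearMap.map_sum₂]
  congr 1
  · refine Finset.sum_congr rfl fun i hi => ?_
    have hi : i < a := Finset.mem_range.mp hi
    rw [smul_hmul, hmul_assoc _ _ (idn 1), idn_hmul_idn (by lia) zero_le_one,
      show (m + a - 1 - m - i + 1 : ℤ) = m + a - m - i by ring]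
  · rw [rightmost, add_sub_cancel_left, sub_self, hmul_idn_zero]

theorem leftmost_eq_hmul_idn_one {N : ℤ} (hN : m < N) :
    leftmost f N = leftmost f (N - 1) ⊙ idn 1 := by
  rw [leftmost, leftmost, hmul_assoc, idn_hmul_idn (by lia) zero_le_one, sub_right_comm,
    sub_add_cancel]

/-- For `N ≥ m + n` the leftmost `f` and the rightmost `g` are on disjoint wires. -/
theorem leftmost_mul_rightmost {N : ℤ} (hN : m + n ≤ N) :
    leftmost f (N - deg g) * rightmost g N =
      (deg f * deg g).negOnePow • (rightmost g (N - deg f) * leftmost f N) := by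
  obtain ⟨a, rfl⟩ : ∃ a : ℕ, N = m + (a + n) := ⟨(N - m - n).toNat, by lia⟩
  have slide := hmul_idn_mul_idn_hmul (of_mem_component f)
    (hmul_mem_component (idn_mem_component a) (of_mem_component g))
  simp only [← hmul_assoc, idn_hmul_idn (Nat.cast_nonneg _) (Nat.cast_nonneg a)] at slide
  have hf : (m + (a + n) - deg g - m : ℤ) = a + q := by unfold deg; ring
  have hg : (m + (a + n) - n : ℤ) = m + a := by ring
  have hg' : (m + (a + n) - deg f - n : ℤ) = p + a := by unfold deg; ring
  rw [leftmost, leftmost, rightmost, rightmost, hf, hg, hg', add_sub_cancel_left,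
    smul_mul_assoc, mul_smul_comm, smul_smul, ← Int.negOnePow_add, slide]
  congr 2
  unfold deg
  ring

/-- The operation `f ⋆ g` on `N` input wires; `f ⋆ g` itself is the value at `m + n - 1`, see
`of_star`. -/
def starOn (N : ℤ) : Total 𝓟 :=
  leftmost f (N - deg g) * placements g N +
    (placements f (N - deg g) - leftmost f (N - deg g)) * leftmost g N

theorem starOn_eq_sub_shift_mul_shift (N : ℤ) :
    starOn f g N = placements f (N - deg g) * placements g N -
      shift (deg f) (placements f) (N - deg g) * shift (deg g) (placements g) N := by
  rw [starOn, ← leftPart_placements f, ← leftPart_placements g, leftPart_apply, leftPart_apply,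
    Pi.sub_apply, Pi.sub_apply]
  noncomm_ring

/-- The bracket `[f, g]` on `N` input wires; `[f, g]` itself is the value at `m + n - 1`, see
`of_brk`. -/
def bracketOn (N : ℤ) : Total 𝓟 :=
  starOn f g N - (deg f * deg g).negOnePow • starOn g f N

theorem bracketOn_swap (N : ℤ) :
    bracketOn f g N = -((deg f * deg g).negOnePow • bracketOn g f N) := by
  rw [bracketOn, bracketOn, smul_sub, smul_smul, mul_comm (deg g), Int.units_mul_self, one_smul,
    neg_sub]

/-- The graded commutator of the signed sums of `f` and of `g` over all positions. -/
def placementsComm : ℤ → Total 𝓟 :=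
  gradedComm (deg f) (placements f) (deg g) (placements g)

theorem placementsComm_mem_gradedFamily :
    placementsComm f g ∈ gradedFamily 𝓟 (deg f + deg g) :=
  gradedComm_mem_gradedFamily (placements_mem_gradedFamily f) (placements_mem_gradedFamily g)

theorem leftPart_placementsComm :
    leftPart (deg f + deg g) (placementsComm f g) = bracketOn f g := by
  rw [placementsComm,
    leftPart_gradedComm (placements_mem_gradedFamily f) (placements_mem_gradedFamily g)]
  funext N
  simp only [bracketOn, starOn_eq_sub_shift_mul_shift, gradedComm, Pi.sub_apply, smul_sub]
  abel

theorem starOn_succ (hm : 1 ≤ m) (hq : 1 ≤ q) {N : ℤ} (hN : m + n ≤ N) :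
    starOn f g N = starOn f g (N - 1) ⊙ idn 1 +
      (leftmost f (N - deg g) * rightmost g N + rightmost f (N - deg g) * leftmost g N) := by
  have hf := leftmost_mem_gradedFamily f
  have hg := leftmost_mem_gradedFamily g
  have hSf := placements_mem_gradedFamily f
  have hSg := placements_mem_gradedFamily g
  have hd : deg g = n - q := rfl
  rw [starOn, starOn, LinearMap.map_add₂, mul_hmul_idn (hf _) (hSg _),
    mul_hmul_idn (sub_mem (hSf _) (hf _)) (hg _), sub_right_comm N 1 (deg g), LinearMap.map_sub₂,
    ← leftmost_eq_hmul_idn_one f (by lia), ← leftmost_eq_hmul_idn_one g (by lia),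
    placements_eq_hmul_idn_one_add_rightmost g N,
    placements_eq_hmul_idn_one_add_rightmost f (N - deg g)]
  noncomm_ring

/-- On more than `m + n - 1` wires, the new terms of `f ⋆ g` and of `g ⋆ f` are those in which `f`
and `g` do not meet, and these cancel in the bracket. -/
theorem bracketOn_succ (hm : 1 ≤ m) (hp : 1 ≤ p) (hn : 1 ≤ n) (hq : 1 ≤ q) {N : ℤ}
    (hN : m + n ≤ N) : bracketOn f g N = bracketOn f g (N - 1) ⊙ idn 1 := by
  rw [bracketOn, bracketOn, starOn_succ f g hm hq hN, starOn_succ g f hn hp (by lia),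
    LinearMap.map_sub₂, smul_hmul, leftmost_mul_rightmost f g hN,
    leftmost_mul_rightmost g f (by lia), smul_add, smul_add, smul_smul, mul_comm (deg g),
    Int.units_mul_self, one_smul]
  abel

end

/-! ### Comparison with the bracket of the PROP -/

section

variable (f : 𝓟.P m p) (g : 𝓟.P n q) (h : 𝓟.P l r)

theorem placements_sub_leftmost_natCast_add (a : ℕ) : placements f (m + a) - leftmost f (m + a) =
    ∑ i ∈ Finset.range a, ((i + 1) * deg f).negOnePow •
      of (𝓟.hcomp (𝓟.hcomp (𝓟.ids (i + 1)) f) (𝓟.ids (a - (i + 1)))) := by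
  rw [placements_natCast_add, Finset.sum_range_succ', leftmost_natCast_add]
  simp only [← of_hmul_of, ← idn_natCast, Nat.cast_zero, idn_zero_hmul, zero_mul,
    Int.negOnePow_zero, one_smul, Nat.sub_zero, add_sub_cancel_right, Nat.cast_succ]

theorem of_star (hm : 1 ≤ m) (hq : 1 ≤ q) :
    of (𝓟.star hm hq f g) = starOn f g (m + n - 1) := by
  have hf : (m + n - 1 - deg g : ℤ) = m + (q - 1 : ℕ) := by unfold deg; lia
  have hg : (m + n - 1 : ℤ) = n + (m - 1 : ℕ) := by lia
  have hdf : (p - m : ℤ) = - deg f := by unfold deg; ring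
  have hdg : (q - n : ℤ) = - deg g := by unfold deg; ring
  rw [starOn, hf, hg, placements_sub_leftmost_natCast_add, placements_natCast_add,
    leftmost_natCast_add, leftmost_natCast_add, Nat.sub_add_cancel hm, Finset.sum_range,
    Finset.sum_range, Finset.mul_sum, Finset.sum_mul, LinearPROP.star, of_pcast, map_add, map_sum,
    map_sum]
  simp only [hdf, hdg, mul_neg, Int.negOnePow_neg, ← Units.smul_def,
    LinearMap.map_smul_of_tower, of_pcast, ← of_mul_of, mul_smul_comm, smul_mul_assoc]

variable (hm : 1 ≤ m) (hp : 1 ≤ p) (hn : 1 ≤ n) (hq : 1 ≤ q) (hl : 1 ≤ l) (hr : 1 ≤ r)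

theorem deg_brk : deg (𝓟.brk hm hp hn hq f g) = deg f + deg g := by
  unfold deg
  lia

theorem of_brk : of (𝓟.brk hm hp hn hq f g) = bracketOn f g (m + n - 1) := by
  rw [LinearPROP.brk, map_sub, map_zsmul, of_pcast, of_star f g hm hq, of_star g f hn hp,
    add_comm (n : ℤ), bracketOn, Units.smul_def]
  rfl

theorem leftmost_brk {N : ℤ} (hN : m + n - 1 ≤ N) :
    leftmost (𝓟.brk hm hp hn hq f g) N = bracketOn f g N := by
  induction N, hN using Int.leInduction with
  | base =>
    have hidle : (m + n - 1 - (m + n - 1 : ℕ) : ℤ) = 0 := by lia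
    rw [leftmost, of_brk, hidle, hmul_idn_zero]
  | succ N hN ih =>
    rw [bracketOn_succ f g hm hp hn hq (by lia), leftmost_eq_hmul_idn_one _ (by lia),
      add_sub_cancel_right, ih]

/-- The failure of `placements` to be compatible with brackets. It is caused by overlaps of more
than one wire, for which `[f, g]` contains idle wires on the right. -/
def defect : ℤ → Total 𝓟 := placementsComm f g - placements (𝓟.brk hm hp hn hq f g)

theorem defect_mem_gradedFamily : defect f g hm hp hn hq ∈ gradedFamily 𝓟 (deg f + deg g) :=
  sub_mem (placementsComm_mem_gradedFamily f g) <|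
    deg_brk f g hm hp hn hq ▸ placements_mem_gradedFamily (𝓟.brk hm hp hn hq f g)

theorem leftPart_defect {N : ℤ} (hN : m + n - 1 ≤ N) :
    leftPart (deg f + deg g) (defect f g hm hp hn hq) N = 0 := by
  rw [defect, map_sub, leftPart_placementsComm, ← deg_brk f g hm hp hn hq, leftPart_placements,
    Pi.sub_apply, leftmost_brk f g hm hp hn hq hN, sub_self]

theorem defect_add_natCast (a : ℕ) : defect f g hm hp hn hq (m + n - 2 + a) =
    (a * (deg f + deg g)).negOnePow • (idn a ⊙ defect f g hm hp hn hq (m + n - 2)) := by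
  induction a with
  | zero => simp [idn_zero_hmul]
  | succ a ih =>
    have hshift := leftPart_defect f g hm hp hn hq
      (show (m + n - 1 : ℤ) ≤ m + n - 2 + (a + 1 : ℕ) by lia)
    rw [leftPart_apply, Pi.sub_apply, sub_eq_zero] at hshift
    rw [hshift, shift_apply, Nat.cast_succ, ← add_assoc, add_sub_cancel_right, ih, hmul_smul,
      smul_smul, ← Int.negOnePow_add, ← hmul_assoc, idn_hmul_idn zero_le_one a.cast_nonneg,
      add_one_mul, add_comm (deg f + deg g), add_comm (1 : ℤ)]

/-- On `m + n + l - 2` wires, the leftmost `h` and the defect, which is at the far right, are on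
disjoint wires. -/
theorem gradedComm_defect_leftmost :
    gradedComm (deg f + deg g) (defect f g hm hp hn hq) (deg h) (leftmost h) (m + n + l - 2) =
      0 := by
  have slide := hmul_idn_mul_idn_hmul (of_mem_component h)
    (defect_mem_gradedFamily f g hm hp hn hq (m + n - 2))
  have hR : (m + n + l - 2 - deg h : ℤ) = m + n - 2 + r := by unfold deg; ring
  have hW : (m + n + l - 2 : ℤ) = m + n - 2 + l := by ring
  have hh : (m + n - 2 + l - (deg f + deg g) - l : ℤ) = m + n - 2 - (deg f + deg g) := by ring
  have hh' : (m + n - 2 + l - l : ℤ) = m + n - 2 := by ring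
  have hsign : ((deg f + deg g) * deg h + l * (deg f + deg g)).negOnePow =
      (r * (deg f + deg g)).negOnePow := by
    rw [Int.negOnePow_eq_iff]
    exact ⟨(deg f + deg g) * deg h, by unfold deg; ring⟩
  rw [gradedComm, hR, hW, defect_add_natCast, defect_add_natCast, leftmost, leftmost, hh, hh',
    smul_mul_assoc, mul_smul_comm, smul_smul, ← Int.negOnePow_add, hsign, slide, sub_self]

theorem of_brk_brk (hmn : 1 ≤ m + n - 1) (hpq : 1 ≤ p + q - 1) :
    of (𝓟.brk hmn hpq hl hr (𝓟.brk hm hp hn hq f g) h) =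
      leftPart (deg f + deg g + deg h)
        (gradedComm (deg f + deg g) (placementsComm f g) (deg h) (placements h))
        (m + n + l - 2) := by
  have hd : deg h = l - r := rfl
  have hdefect := leftPart_gradedComm_of_leftPart_eq_zero (N := m + n + l - 2)
    (defect_mem_gradedFamily f g hm hp hn hq) (placements_mem_gradedFamily h)
    (leftPart_defect f g hm hp hn hq (by lia)) (leftPart_defect f g hm hp hn hq (by lia))
  rw [leftPart_placements, gradedComm_defect_leftmost, defect, gradedComm_sub_left, map_sub,
    Pi.sub_apply, sub_eq_zero] at hdefect
  have hwires : ((m + n - 1 : ℕ) + l - 1 : ℤ) = m + n + l - 2 := by lia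
  rw [hdefect, of_brk, ← leftPart_placementsComm, placementsComm, deg_brk, hwires]

theorem of_brk_jacobi (hmn : 1 ≤ m + n - 1) (hpq : 1 ≤ p + q - 1) (hnl : 1 ≤ n + l - 1)
    (hqr : 1 ≤ q + r - 1) (hlm : 1 ≤ l + m - 1) (hrp : 1 ≤ r + p - 1) :
    (deg f * deg h).negOnePow • of (𝓟.brk hmn hpq hl hr (𝓟.brk hm hp hn hq f g) h)
      + (deg g * deg f).negOnePow • of (𝓟.brk hnl hqr hm hp (𝓟.brk hn hq hl hr g h) f)
      + (deg h * deg g).negOnePow • of (𝓟.brk hlm hrp hn hq (𝓟.brk hl hr hm hp h f) g) = 0 := by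
  have hjacobi := congrFun (congrArg (leftPart (deg f + deg g + deg h)) (gradedComm_jacobi
    (deg f) (deg g) (deg h) (placements f) (placements g) (placements h))) (m + n + l - 2)
  rw [of_brk_brk, of_brk_brk, of_brk_brk, show (n + l + m - 2 : ℤ) = m + n + l - 2 by ring,
    show (l + m + n - 2 : ℤ) = m + n + l - 2 by ring,
    show deg g + deg h + deg f = deg f + deg g + deg h by ring,
    show deg h + deg f + deg g = deg f + deg g + deg h by ring]
  simpa only [map_add, map_zero, LinearMap.map_smul_of_tower, Pi.add_apply, Pi.smul_apply,
    Pi.zero_apply, placementsComm] using hjacobi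

end

end

end Total

end LinearPROP

/-- for a `k`-linear non-symmetric PROP `𝓟`, the bracket
`[f, g] = f ⋆ g − (−1)^{(m−p)(n−q)} g ⋆ f` makes the positive total space
`⊕_{m,p ≥ 1} P(m,p)` (graded by `deg f = m − p`) into a ℤ-graded Lie algebra:
it is graded antisymmetric and satisfies the graded Jacobi identity. -/
theorem linearPROP_bracket_graded_lie (𝓟 : LinearPROP k)
    (m p n q l r : ℕ) (hm : 1 ≤ m) (hp : 1 ≤ p) (hn : 1 ≤ n) (hq : 1 ≤ q)
    (hl : 1 ≤ l) (hr : 1 ≤ r)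
    (f : 𝓟.P m p) (g : 𝓟.P n q) (h : 𝓟.P l r) :
    𝓟.brk hm hp hn hq f g
        = -(((((m : ℤ) - (p : ℤ)) * ((n : ℤ) - (q : ℤ))).negOnePow : ℤ) •
            pcast (P := 𝓟.P) (show n + m - 1 = m + n - 1 by omega)
              (show q + p - 1 = p + q - 1 by omega) (𝓟.brk hn hq hm hp g f))
      ∧ ((((((m : ℤ) - (p : ℤ)) * ((l : ℤ) - (r : ℤ))).negOnePow : ℤ) •
            pcast (P := 𝓟.P) (show m + n - 1 + l - 1 = m + n + l - 2 by omega)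
              (show p + q - 1 + r - 1 = p + q + r - 2 by omega)
              (𝓟.brk (by omega) (by omega) hl hr (𝓟.brk hm hp hn hq f g) h))
          + (((((n : ℤ) - (q : ℤ)) * ((m : ℤ) - (p : ℤ))).negOnePow : ℤ) •
              pcast (P := 𝓟.P) (show n + l - 1 + m - 1 = m + n + l - 2 by omega)
                (show q + r - 1 + p - 1 = p + q + r - 2 by omega)
                (𝓟.brk (by omega) (by omega) hm hp (𝓟.brk hn hq hl hr g h) f))
          + (((((l : ℤ) - (r : ℤ)) * ((n : ℤ) - (q : ℤ))).negOnePow : ℤ) •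
              pcast (P := 𝓟.P) (show l + m - 1 + n - 1 = m + n + l - 2 by omega)
                (show r + p - 1 + q - 1 = p + q + r - 2 by omega)
                (𝓟.brk (by omega) (by omega) hn hq (𝓟.brk hl hr hm hp h f) g))
        = 0) := by
  constructor
  · apply LinearPROP.Total.of_injective
    rw [map_neg, map_zsmul, LinearPROP.Total.of_pcast, LinearPROP.Total.of_brk,
      LinearPROP.Total.of_brk, LinearPROP.Total.bracketOn_swap, add_comm (n : ℤ)]
    rfl
  · apply LinearPROP.Total.of_injective
    simp only [map_add, map_zsmul, map_zero, LinearPROP.Total.of_pcast]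
    exact LinearPROP.Total.of_brk_jacobi f g h hm hp hn hq hl hr _ _ _ _ _ _
end
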